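/- arXiv:2110.04799 — 5 statements merged into one kernel-verified Lean document; each statement's English description precedes it below -/
import Mathlib

section
/- For every even positive integer n, 16·T(3,10,45;n) = N(3,10,45;4(8n+58)) − N(3,10,45;8n+58). -/
/-!
Put `m = 8 n + 58`; as `n` is even, `m ≡ 10 (mod 16)`. All the counts are compared with the size of
one auxiliary set `U m`, the triples `(Z, e, t)` with `Z`, `t` odd and
`48 (Z² + e Z + 4 e²) + 10 (2 t - 3 Z - 6 e)² = m`.

* `16 T`: completing squares, `8 T` is the number of solutions of `3 x² + 10 y² + 45 z² = m` with
  `x, y, z` odd. The congruence modulo 16 forces `x ≡ ± z (mod 8)`; normalising the sign of `z` and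
  writing `x = z + 8 e` turns `x² + 15 z²` into `16 (z² + e z + 4 e²)`, and exactly one choice of the
  sign of `y` makes `(y + 3 z + 6 e) / 2` odd. Hence `8 T = 4 |U|` (`ncard_oddSol`).
* `N(4m) - N(m)`: the solutions of level `4m` with `x, z` even are the doubles of the solutions of
  level `m`. All others have `x, z` odd and `y = 2 w`. Those with `w` odd are again, up to the signs of
  `y` and `z`, parametrised by `U m`, through multiplication by an element of norm 4 in the ring of
  integers of `ℚ(√-15)`; this gives `4 |U|` (`ncard_solA`).
* Those with `w` even are matched with `U m` by means of the reflection of the ternary form in the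
  vector `(5, 2, 1)` (in the order `x, y, z`), which has 2-power denominators. It is applied to the two
  points `(Z + 8 e, Y, Z)` and `(4 Z + 2 e, Y, 2 e)` of level `m`, where `Y = 2 t - 3 Z - 6 e`. The two
  resulting families have `2 |U|` members each, after allowing both signs of `z`,
  and are disjoint and exhaustive (`solB_eq`, `ncard_solB`).

Altogether `N(4m) - N(m) = 8 |U| = 16 T`.
-/

/-- Number of representations of `n` as `a*x^2 + b*y^2 + c*z^2` with `x,y,z : ℤ`. -/
noncomputable def N (a b c n : ℕ) : ℕ :=
  Nat.card {p : ℤ × ℤ × ℤ //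
    (a : ℤ) * p.1 ^ 2 + (b : ℤ) * p.2.1 ^ 2 + (c : ℤ) * p.2.2 ^ 2 = (n : ℤ)}

/-- Number of representations of `n` as `a*x(x+1)/2 + b*y(y+1)/2 + c*z(z+1)/2` with `x,y,z : ℕ`. -/
noncomputable def T (a b c n : ℕ) : ℕ :=
  Nat.card {p : ℕ × ℕ × ℕ //
    a * (p.1 * (p.1 + 1) / 2) + b * (p.2.1 * (p.2.1 + 1) / 2)
      + c * (p.2.2 * (p.2.2 + 1) / 2) = n}

/-- Integer solutions of `3 x² + 10 y² + 45 z² = m`. -/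
def sol (m : ℤ) : Set (ℤ × ℤ × ℤ) :=
  {p | 3 * p.1 ^ 2 + 10 * p.2.1 ^ 2 + 45 * p.2.2 ^ 2 = m}

/-- Solutions of `3 x² + 10 y² + 45 z² = m` with all coordinates odd. -/
def oddSol (m : ℤ) : Set (ℤ × ℤ × ℤ) :=
  {p | 3 * p.1 ^ 2 + 10 * p.2.1 ^ 2 + 45 * p.2.2 ^ 2 = m ∧
    p.1 % 2 = 1 ∧ p.2.1 % 2 = 1 ∧ p.2.2 % 2 = 1}

/-- The auxiliary set of triples `(Z, e, t)` with which all counts are compared. -/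
def U (m : ℤ) : Set (ℤ × ℤ × ℤ) :=
  {p | 48 * (p.1 ^ 2 + p.2.1 * p.1 + 4 * p.2.1 ^ 2)
      + 10 * (2 * p.2.2 - 3 * p.1 - 6 * p.2.1) ^ 2 = m ∧ p.1 % 2 = 1 ∧ p.2.2 % 2 = 1}

/-- The set of signs `{1, -1}`. -/
def sgn : Set ℤ := {1, -1}

lemma ncard_sgn : sgn.ncard = 2 := Set.ncard_pair (by norm_num)

/-- Solutions of level `4m` with `x, z` odd and `y ≡ 2 (mod 4)`. -/
def solA (m : ℤ) : Set (ℤ × ℤ × ℤ) :=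
  {p | 3 * p.1 ^ 2 + 10 * p.2.1 ^ 2 + 45 * p.2.2 ^ 2 = 4 * m ∧
    p.1 % 2 = 1 ∧ p.2.1 % 4 = 2 ∧ p.2.2 % 2 = 1}

/-- The parametrisation of `oddSol m` by two signs and a point of `U m`. -/
def mapO (q : ℤ × ℤ × ℤ × ℤ × ℤ) : ℤ × ℤ × ℤ :=
  match q with
  | (r, s, Z, e, t) => (Z + 8 * e, r * (2 * t - 3 * Z - 6 * e), s * Z)

/-- The parametrisation of `solA m` by two signs and a point of `U m`. -/
def mapA (q : ℤ × ℤ × ℤ × ℤ × ℤ) : ℤ × ℤ × ℤ :=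
  match q with
  | (r, s, Z, e, t) => (4 * e - 7 * Z, r * (2 * (2 * t - 3 * Z - 6 * e)), s * (Z + 4 * e))

/-- Twice the reflection in `(5, 2, 1)` of the point `(Z + 8 e, 2 t - 3 Z - 6 e, Z)`, with a sign. -/
def mapB₁ (q : ℤ × ℤ × ℤ × ℤ) : ℤ × ℤ × ℤ :=
  match q with
  | (s, Z, e, t) => (2 * Z + 16 * e - 5 * t, 2 * (t - 3 * Z - 6 * e), s * (2 * Z - t))

/-- Twice the reflection in `(5, 2, 1)` of the point `(4 Z + 2 e, 2 t - 3 Z - 6 e, 2 e)`, with a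
sign. -/
def mapB₂ (q : ℤ × ℤ × ℤ × ℤ) : ℤ × ℤ × ℤ :=
  match q with
  | (s, Z, e, t) => (8 * Z + 4 * e - 5 * t, 2 * (t - 3 * Z - 6 * e), s * (4 * e - t))

/-! ### Congruences for squares -/

lemma exists_sq_of_odd {x : ℤ} (hx : x % 2 = 1) : ∃ k, x ^ 2 = 8 * k + 1 := by
  obtain ⟨a, rfl⟩ : ∃ a, x = 2 * a + 1 := ⟨x / 2, by omega⟩
  obtain ⟨c, hc⟩ : (2 : ℤ) ∣ a * (a + 1) := (Int.even_mul_succ_self a).two_dvd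
  exact ⟨c, by linear_combination 4 * hc⟩

lemma eight_dvd_of_sq {x z : ℤ} (hx : x % 2 = 1) (hz : z % 2 = 1) (h : (16 : ℤ) ∣ x ^ 2 - z ^ 2) :
    (∃ e, x = z + 8 * e) ∨ ∃ e, x = -z + 8 * e := by
  obtain ⟨a, rfl⟩ : ∃ a, x = 2 * a + 1 := ⟨x / 2, by omega⟩
  obtain ⟨b, rfl⟩ : ∃ b, z = 2 * b + 1 := ⟨z / 2, by omega⟩
  have h4 : (2 : ℤ) ^ 2 ∣ (a - b) * (a + b + 1) := by
    obtain ⟨c, hc⟩ := h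
    exact ⟨c, by linarith⟩
  -- the two factors have opposite parities, so 4 divides one of them
  rcases Int.even_or_odd (a - b) with hp | hp
  · have h2 : IsCoprime ((2 : ℤ) ^ 2) (a + b + 1) := by
      apply IsCoprime.pow_left
      obtain ⟨c, hc⟩ := hp
      exact ⟨-(c + b), 1, by linarith⟩
    obtain ⟨c, hc⟩ := h2.dvd_of_dvd_mul_right h4
    exact Or.inl ⟨c, by linarith⟩
  · have h2 : IsCoprime ((2 : ℤ) ^ 2) (a - b) := by
      apply IsCoprime.pow_left
      obtain ⟨c, hc⟩ := hp
      exact ⟨-c, 1, by linarith⟩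
    obtain ⟨c, hc⟩ := h2.dvd_of_dvd_mul_left h4
    exact Or.inr ⟨c, by linarith⟩

/-! ### The parametrisations -/

set_option maxHeartbeats 1000000 in
lemma bijOn_mapO {m : ℤ} (hm : m % 16 = 10) :
    Set.BijOn mapO (sgn ×ˢ sgn ×ˢ U m) (oddSol m) := by
  refine ⟨?_, ?_, ?_⟩
  · rintro ⟨r, s, Z, e, t⟩ ⟨hr, hs, h, hZ, ht⟩
    simp only [sgn, Set.mem_insert_iff, Set.mem_singleton_iff] at hr hs h hZ ht
    refine ⟨?_, ?_, ?_, ?_⟩ <;> simp only [mapO] <;> rcases hr with rfl | rfl <;>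
      rcases hs with rfl | rfl <;> first | omega | linear_combination h
  · rintro ⟨r, s, Z, e, t⟩ ⟨hr, hs, h, hZ, ht⟩ ⟨r', s', Z', e', t'⟩ ⟨hr', hs', h', hZ', ht'⟩ heq
    simp only [sgn, Set.mem_insert_iff, Set.mem_singleton_iff] at hr hs h hZ ht hr' hs' h' hZ' ht'
    simp only [mapO, Prod.mk.injEq] at heq ⊢
    clear h h'
    rcases hr with rfl | rfl <;> rcases hs with rfl | rfl <;> rcases hr' with rfl | rfl <;>
      rcases hs' with rfl | rfl <;> omega
  · rintro ⟨x, y, z⟩ ⟨h, hx, hy, hz⟩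
    simp only at h hx hy hz
    obtain ⟨s, hs, z', hz', rfl, e, rfl⟩ :
        ∃ s ∈ sgn, ∃ z', z' % 2 = 1 ∧ z = s * z' ∧ ∃ e, x = z' + 8 * e := by
      have h16 : (16 : ℤ) ∣ x ^ 2 - z ^ 2 := by
        obtain ⟨a, ha⟩ := exists_sq_of_odd hx
        obtain ⟨b, hb⟩ := exists_sq_of_odd hy
        obtain ⟨c, hc⟩ := exists_sq_of_odd hz
        rw [ha, hb, hc] at h
        rw [ha, hc]
        omega
      rcases eight_dvd_of_sq hx hz h16 with ⟨e, he⟩ | ⟨e, he⟩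
      · exact ⟨1, by simp [sgn], z, hz, by ring, e, he⟩
      · exact ⟨-1, by simp [sgn], -z, by omega, by ring, e, he⟩
    obtain ⟨r, hr, t, ht, rfl⟩ :
        ∃ r ∈ sgn, ∃ t, t % 2 = 1 ∧ y = r * (2 * t - 3 * z' - 6 * e) := by
      by_cases hc : (y + 3 * z' + 6 * e) % 4 = 2
      · exact ⟨1, by simp [sgn], (y + 3 * z' + 6 * e) / 2, by omega, by omega⟩
      · exact ⟨-1, by simp [sgn], (-y + 3 * z' + 6 * e) / 2, by omega, by omega⟩
    refine ⟨(r, s, z', e, t), ⟨hr, hs, ?_, hz', ht⟩, rfl⟩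
    simp only [sgn, Set.mem_insert_iff, Set.mem_singleton_iff] at hr hs ⊢
    rcases hr with rfl | rfl <;> rcases hs with rfl | rfl <;> linear_combination h

set_option maxHeartbeats 1000000 in
lemma bijOn_mapA {m : ℤ} (hm : m % 16 = 10) :
    Set.BijOn mapA (sgn ×ˢ sgn ×ˢ U m) (solA m) := by
  refine ⟨?_, ?_, ?_⟩
  · rintro ⟨r, s, Z, e, t⟩ ⟨hr, hs, h, hZ, ht⟩
    simp only [sgn, Set.mem_insert_iff, Set.mem_singleton_iff] at hr hs h hZ ht
    refine ⟨?_, ?_, ?_, ?_⟩ <;> simp only [mapA] <;> rcases hr with rfl | rfl <;>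
      rcases hs with rfl | rfl <;> first | omega | linear_combination 4 * h
  · rintro ⟨r, s, Z, e, t⟩ ⟨hr, hs, h, hZ, ht⟩ ⟨r', s', Z', e', t'⟩ ⟨hr', hs', h', hZ', ht'⟩ heq
    simp only [sgn, Set.mem_insert_iff, Set.mem_singleton_iff] at hr hs h hZ ht hr' hs' h' hZ' ht'
    simp only [mapA, Prod.mk.injEq] at heq ⊢
    clear h h'
    rcases hr with rfl | rfl <;> rcases hs with rfl | rfl <;> rcases hr' with rfl | rfl <;>
      rcases hs' with rfl | rfl <;> omega
  · rintro ⟨x, y, z⟩ ⟨h, hx, hy, hz⟩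
    simp only at h hx hy hz
    obtain ⟨w, rfl⟩ : ∃ w, y = 2 * w := ⟨y / 2, by omega⟩
    have hw : w % 2 = 1 := by omega
    obtain ⟨b, hb⟩ := exists_sq_of_odd hw
    obtain ⟨s, hs, z', hz', rfl, g, rfl⟩ :
        ∃ s ∈ sgn, ∃ z', z' % 2 = 1 ∧ z = s * z' ∧ ∃ g, x = z' + 8 * g := by
      have h16 : (16 : ℤ) ∣ x ^ 2 - z ^ 2 := by
        obtain ⟨a, ha⟩ := exists_sq_of_odd hx
        obtain ⟨c, hc⟩ := exists_sq_of_odd hz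
        rw [mul_pow, ha, hb, hc] at h
        rw [ha, hc]
        omega
      rcases eight_dvd_of_sq hx hz h16 with ⟨e, he⟩ | ⟨e, he⟩
      · exact ⟨1, by simp [sgn], z, hz, by ring, e, he⟩
      · exact ⟨-1, by simp [sgn], -z, by omega, by ring, e, he⟩
    have hs2 : s ^ 2 = 1 := by rcases hs with rfl | rfl <;> norm_num
    -- the equation modulo 64 gives `z' (z' + g) ≡ 0 (mod 4)`
    obtain ⟨e, he⟩ : (4 : ℤ) ∣ z' + g := by
      have h4 : (2 : ℤ) ^ 2 ∣ z' * (z' + g) := by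
        have h1 : 48 * (z' * (z' + g)) + 192 * g ^ 2 + 40 * (8 * b + 1) = 4 * m := by
          rw [← hb]; linear_combination h - 45 * z' ^ 2 * hs2
        generalize z' * (z' + g) = u at h1 ⊢
        generalize g ^ 2 = v at h1
        omega
      have h2 : IsCoprime ((2 : ℤ) ^ 2) z' := by
        apply IsCoprime.pow_left
        exact ⟨-(z' / 2), 1, by omega⟩
      exact h2.dvd_of_dvd_mul_left h4
    obtain ⟨Z, rfl⟩ : ∃ Z, g = -Z := ⟨-g, by ring⟩
    obtain rfl : z' = Z + 4 * e := by omega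
    obtain ⟨r, hr, t, ht, rfl⟩ :
        ∃ r ∈ sgn, ∃ t, t % 2 = 1 ∧ w = r * (2 * t - 3 * Z - 6 * e) := by
      by_cases hc : (w + 3 * Z + 6 * e) % 4 = 2
      · exact ⟨1, by simp [sgn], (w + 3 * Z + 6 * e) / 2, by omega, by omega⟩
      · exact ⟨-1, by simp [sgn], (-w + 3 * Z + 6 * e) / 2, by omega, by omega⟩
    have hr2 : r ^ 2 = 1 := by rcases hr with rfl | rfl <;> norm_num
    refine ⟨(r, s, Z, e, t), ⟨hr, hs, ?_, by simp only; omega, ht⟩, ?_⟩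
    · simp only
      refine mul_left_cancel₀ (four_ne_zero (α := ℤ)) ?_
      linear_combination h - 40 * (2 * t - 3 * Z - 6 * e) ^ 2 * hr2 - 45 * (Z + 4 * e) ^ 2 * hs2
    · simp only [mapA, Prod.mk.injEq]
      refine ⟨by ring, by ring, trivial⟩

lemma injOn_mapB₁ (m : ℤ) : Set.InjOn mapB₁ (sgn ×ˢ U m) := by
  rintro ⟨s, Z, e, t⟩ ⟨hs, h, hZ, ht⟩ ⟨s', Z', e', t'⟩ ⟨hs', h', hZ', ht'⟩ heq
  simp only [sgn, Set.mem_insert_iff, Set.mem_singleton_iff] at hs h hZ ht hs' h' hZ' ht'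
  simp only [mapB₁, Prod.mk.injEq] at heq ⊢
  clear h h'
  rcases hs with rfl | rfl <;> rcases hs' with rfl | rfl <;> omega

lemma injOn_mapB₂ (m : ℤ) : Set.InjOn mapB₂ (sgn ×ˢ U m) := by
  rintro ⟨s, Z, e, t⟩ ⟨hs, h, hZ, ht⟩ ⟨s', Z', e', t'⟩ ⟨hs', h', hZ', ht'⟩ heq
  simp only [sgn, Set.mem_insert_iff, Set.mem_singleton_iff] at hs h hZ ht hs' h' hZ' ht'
  simp only [mapB₂, Prod.mk.injEq] at heq ⊢
  clear h h'
  rcases hs with rfl | rfl <;> rcases hs' with rfl | rfl <;> omega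

/-- Solutions of level `4m` with `x, z` odd and `y ≡ 0 (mod 4)`. -/
def solB (m : ℤ) : Set (ℤ × ℤ × ℤ) :=
  {p | 3 * p.1 ^ 2 + 10 * p.2.1 ^ 2 + 45 * p.2.2 ^ 2 = 4 * m ∧
    p.1 % 2 = 1 ∧ p.2.1 % 4 = 0 ∧ p.2.2 % 2 = 1}

lemma disjoint_B (m : ℤ) : Disjoint (mapB₁ '' (sgn ×ˢ U m)) (mapB₂ '' (sgn ×ˢ U m)) := by
  rw [Set.disjoint_left]
  rintro _ ⟨⟨s, Z, e, t⟩, ⟨hs, h, hZ, ht⟩, rfl⟩ ⟨⟨s', Z', e', t'⟩, ⟨hs', h', hZ', ht'⟩, heq⟩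
  simp only [sgn, Set.mem_insert_iff, Set.mem_singleton_iff] at hs h hZ ht hs' h' hZ' ht'
  simp only [mapB₁, mapB₂, Prod.mk.injEq] at heq
  clear h h'
  rcases hs with rfl | rfl <;> rcases hs' with rfl | rfl <;> omega

lemma solB_eq {m : ℤ} (hm : m % 16 = 10) :
    solB m = mapB₁ '' (sgn ×ˢ U m) ∪ mapB₂ '' (sgn ×ˢ U m) := by
  apply Set.Subset.antisymm
  · rintro ⟨x, y, z⟩ ⟨h, hx, hy, hz⟩
    simp only at h hx hy hz
    obtain ⟨g, rfl⟩ : ∃ g, y = 4 * g := ⟨y / 4, by omega⟩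
    obtain ⟨s, hs, z', hz', rfl, e, rfl⟩ :
        ∃ s ∈ sgn, ∃ z', z' % 2 = 1 ∧ z = s * z' ∧ ∃ e, x = -(3 * z') + 8 * e := by
      have h16 : (16 : ℤ) ∣ x ^ 2 - (3 * z) ^ 2 := by
        obtain ⟨a, ha⟩ := exists_sq_of_odd hx
        obtain ⟨c, hc⟩ := exists_sq_of_odd hz
        rw [mul_pow, ha, hc] at h
        rw [mul_pow, ha, hc]
        omega
      rcases eight_dvd_of_sq hx (by omega) h16 with ⟨e, he⟩ | ⟨e, he⟩
      · exact ⟨-1, by simp [sgn], -z, by omega, by ring, e, by linarith⟩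
      · exact ⟨1, by simp [sgn], z, hz, by ring, e, he⟩
    have hs2 : s ^ 2 = 1 := by rcases hs with rfl | rfl <;> norm_num
    obtain ⟨c, hc⟩ := exists_sq_of_odd hz'
    have h1 : 72 * (8 * c + 1) - 144 * (e * z') + 192 * e ^ 2 + 160 * g ^ 2 = 4 * m := by
      rw [← hc]; linear_combination h - 45 * z' ^ 2 * hs2
    have he : e % 2 = 0 := by
      have h2 : e * z' % 2 = 0 := by
        generalize e * z' = u at h1 ⊢
        generalize e ^ 2 = v at h1
        generalize g ^ 2 = w at h1
        omega
      rcases Int.emod_two_eq_zero_or_one e with h0 | h0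
      · exact h0
      · rw [Int.mul_emod, h0, hz'] at h2
        norm_num at h2
    obtain ⟨f, rfl⟩ : ∃ f, e = 2 * f := ⟨e / 2, by omega⟩
    have hfg : (f + g) % 2 = 1 := by
      obtain ⟨k, rfl⟩ : ∃ k, z' = 2 * k + 1 := ⟨z' / 2, by omega⟩
      obtain ⟨p, hp⟩ : (2 : ℤ) ∣ g * (g + 1) := (Int.even_mul_succ_self g).two_dvd
      have h2 : 72 * (8 * c + 1) - 576 * (f * k) - 288 * f + 768 * f ^ 2 + 160 * (2 * p - g)
          = 4 * m := by
        linear_combination h1 - 160 * hp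
      generalize f * k = u at h2
      generalize f ^ 2 = v at h2
      omega
    -- `t` is read off from the reflection formula
    obtain ⟨t, ht⟩ : ∃ t, t = -(3 * f + g) := ⟨_, rfl⟩
    obtain rfl : g = -t - 3 * f := by linarith
    have ht1 : t % 2 = 1 := by omega
    by_cases hc4 : (z' + t) % 4 = 2
    · left
      obtain ⟨Z, hZ⟩ : ∃ Z, z' = 2 * Z - t := ⟨(z' + t) / 2, by omega⟩
      subst hZ
      obtain ⟨k, hk⟩ : ∃ k, t - Z = 2 * k := ⟨(t - Z) / 2, by omega⟩
      obtain rfl : t = Z + 2 * k := by linarith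
      obtain ⟨E, rfl⟩ : ∃ E, f = E - k := ⟨f + k, by ring⟩
      refine ⟨(s, Z, E, Z + 2 * k), ⟨hs, ?_, by simp only; omega, ht1⟩, ?_⟩
      · simp only
        refine mul_left_cancel₀ (four_ne_zero (α := ℤ)) ?_
        linear_combination h - 45 * (2 * Z - (Z + 2 * k)) ^ 2 * hs2
      · simp only [mapB₁, Prod.mk.injEq]
        refine ⟨by ring, by ring, trivial⟩
    · right
      obtain ⟨E, hE⟩ : ∃ E, z' = 4 * E - t := ⟨(z' + t) / 4, by omega⟩
      subst hE
      refine ⟨(s, 2 * f + t - 2 * E, E, t), ⟨hs, ?_, by simp only; omega, ht1⟩, ?_⟩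
      · simp only
        refine mul_left_cancel₀ (four_ne_zero (α := ℤ)) ?_
        linear_combination h - 45 * (4 * E - t) ^ 2 * hs2
      · simp only [mapB₂, Prod.mk.injEq]
        refine ⟨by ring, by ring, trivial⟩
  · rintro _ (⟨⟨s, Z, e, t⟩, ⟨hs, h, hZ, ht⟩, rfl⟩ | ⟨⟨s, Z, e, t⟩, ⟨hs, h, hZ, ht⟩, rfl⟩) <;>
    simp only [sgn, Set.mem_insert_iff, Set.mem_singleton_iff] at hs h hZ ht <;>
    refine ⟨?_, ?_, ?_, ?_⟩ <;> simp only [mapB₁, mapB₂] <;>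
      rcases hs with rfl | rfl <;> first | omega | linear_combination 4 * h

/-! ### Counting -/

lemma ncard_oddSol {m : ℤ} (hm : m % 16 = 10) : (oddSol m).ncard = 4 * (U m).ncard := by
  rw [← (bijOn_mapO hm).image_eq, (bijOn_mapO hm).injOn.ncard_image,
    Set.ncard_prod, Set.ncard_prod, ncard_sgn]
  ring

lemma ncard_solA {m : ℤ} (hm : m % 16 = 10) : (solA m).ncard = 4 * (U m).ncard := by
  rw [← (bijOn_mapA hm).image_eq, (bijOn_mapA hm).injOn.ncard_image,
    Set.ncard_prod, Set.ncard_prod, ncard_sgn]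
  ring

lemma finite_sol (m : ℤ) : (sol m).Finite := by
  apply (Set.finite_Icc ((-m, -m, -m) : ℤ × ℤ × ℤ) (m, m, m)).subset
  rintro ⟨x, y, z⟩ h
  simp only [sol, Set.mem_ofPred_eq] at h
  have key : ∀ a : ℤ, a ^ 2 ≤ m → -m ≤ a ∧ a ≤ m := fun a ha =>
    ⟨by nlinarith [sq_nonneg (a + 1), Int.le_self_sq (-a)], by nlinarith [Int.le_self_sq a]⟩
  have hx := key x (by nlinarith [sq_nonneg x, sq_nonneg y, sq_nonneg z])
  have hy := key y (by nlinarith [sq_nonneg x, sq_nonneg y, sq_nonneg z])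
  have hz := key z (by nlinarith [sq_nonneg x, sq_nonneg y, sq_nonneg z])
  exact ⟨⟨hx.1, hy.1, hz.1⟩, ⟨hx.2, hy.2, hz.2⟩⟩

lemma ncard_solB {m : ℤ} (hm : m % 16 = 10) : (solB m).ncard = 4 * (U m).ncard := by
  have hfin : (solB m).Finite := (finite_sol (4 * m)).subset fun p hp => hp.1
  rw [solB_eq hm] at hfin ⊢
  rw [Set.ncard_union_eq (disjoint_B m) (hfin.subset Set.subset_union_left)
    (hfin.subset Set.subset_union_right), (injOn_mapB₁ m).ncard_image,
    (injOn_mapB₂ m).ncard_image, Set.ncard_prod, ncard_sgn]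
  ring

/-- The solutions of level `4m` are the doubles of those of level `m`, together with the ones for
which `x, z` are odd; in the latter `y` is even. -/
lemma sol_four_mul {m : ℤ} (hm : m % 16 = 10) :
    sol (4 * m) = (fun p : ℤ × ℤ × ℤ => (2 * p.1, 2 * p.2.1, 2 * p.2.2)) '' sol m
      ∪ (solA m ∪ solB m) := by
  apply Set.Subset.antisymm
  · rintro ⟨x, y, z⟩ h
    simp only [sol, Set.mem_ofPred_eq] at h
    rcases Int.emod_two_eq_zero_or_one x with hx | hx <;>
      rcases Int.emod_two_eq_zero_or_one z with hz | hz
    · left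
      obtain ⟨a, rfl⟩ : ∃ a, x = 2 * a := ⟨x / 2, by omega⟩
      obtain ⟨c, rfl⟩ : ∃ c, z = 2 * c := ⟨z / 2, by omega⟩
      have hy : y % 2 = 0 := by
        by_contra hy
        obtain ⟨k, hk⟩ := exists_sq_of_odd (x := y) (by omega)
        rw [mul_pow, mul_pow, hk] at h
        omega
      obtain ⟨b, rfl⟩ : ∃ b, y = 2 * b := ⟨y / 2, by omega⟩
      exact ⟨(a, b, c), by simp only [sol, Set.mem_ofPred_eq]; linarith, rfl⟩
    · obtain ⟨a, rfl⟩ : ∃ a, x = 2 * a := ⟨x / 2, by omega⟩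
      obtain ⟨k, hk⟩ := exists_sq_of_odd hz
      rw [mul_pow, hk] at h
      omega
    · obtain ⟨c, rfl⟩ : ∃ c, z = 2 * c := ⟨z / 2, by omega⟩
      obtain ⟨k, hk⟩ := exists_sq_of_odd hx
      rw [mul_pow, hk] at h
      omega
    · right
      have hy : y % 2 = 0 := by
        by_contra hy
        obtain ⟨k, hk⟩ := exists_sq_of_odd (x := y) (by omega)
        obtain ⟨i, hi⟩ := exists_sq_of_odd hx
        obtain ⟨j, hj⟩ := exists_sq_of_odd hz
        rw [hi, hj, hk] at h
        omega
      rcases (by omega : y % 4 = 2 ∨ y % 4 = 0) with h4 | h4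
      · exact Or.inl ⟨h, hx, h4, hz⟩
      · exact Or.inr ⟨h, hx, h4, hz⟩
  · rintro _ (⟨⟨x, y, z⟩, h, rfl⟩ | h | h)
    · simp only [sol, Set.mem_ofPred_eq] at h ⊢
      linear_combination 4 * h
    · exact h.1
    · exact h.1

lemma ncard_sol_four_mul {m : ℤ} (hm : m % 16 = 10) :
    (sol (4 * m)).ncard = (sol m).ncard + 8 * (U m).ncard := by
  have hfin := finite_sol (4 * m)
  rw [sol_four_mul hm] at hfin ⊢
  have h1 := hfin.subset Set.subset_union_left
  have h2 := hfin.subset Set.subset_union_right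
  rw [Set.ncard_union_eq ?_ h1 h2, Set.ncard_union_eq ?_ (h2.subset Set.subset_union_left)
    (h2.subset Set.subset_union_right), ncard_solA hm, ncard_solB hm,
    Set.ncard_image_of_injective]
  · ring
  · rintro ⟨x, y, z⟩ ⟨x', y', z'⟩ h
    simp only [Prod.mk.injEq] at h ⊢
    omega
  · rw [Set.disjoint_left]
    rintro p ⟨-, -, h, -⟩ ⟨-, -, h', -⟩
    omega
  · rw [Set.disjoint_left]
    rintro _ ⟨p, -, rfl⟩ (⟨-, h, -⟩ | ⟨-, h, -⟩) <;> simp only at h <;> omega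

lemma N_eq_ncard (k : ℕ) : N 3 10 45 k = (sol k).ncard := by
  rw [N, ← Nat.card_coe_set_eq]
  rfl

/-- Completing squares: each representation counted by `T` gives eight odd solutions, one for each
choice of signs. -/
lemma eight_mul_T (n : ℕ) : (oddSol (8 * n + 58)).ncard = 8 * T 3 10 45 n := by
  let V : Set (ℕ × ℕ × ℕ) := {p | 3 * (p.1 * (p.1 + 1) / 2) + 10 * (p.2.1 * (p.2.1 + 1) / 2)
      + 45 * (p.2.2 * (p.2.2 + 1) / 2) = n}
  have hT : T 3 10 45 n = V.ncard := by
    rw [T, ← Nat.card_coe_set_eq]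
    rfl
  let f : ℤ × ℤ × ℤ × ℕ × ℕ × ℕ → ℤ × ℤ × ℤ := fun q =>
    (q.1 * (2 * q.2.2.2.1 + 1), q.2.1 * (2 * q.2.2.2.2.1 + 1), q.2.2.1 * (2 * q.2.2.2.2.2 + 1))
  have hV : ∀ x y z : ℕ, (x, y, z) ∈ V ↔ 3 * (2 * (x : ℤ) + 1) ^ 2 + 10 * (2 * (y : ℤ) + 1) ^ 2
      + 45 * (2 * (z : ℤ) + 1) ^ 2 = 8 * n + 58 := by
    intro x y z
    have key : ∀ a : ℕ, (2 * (a : ℤ) + 1) ^ 2 = 8 * ((a * (a + 1) / 2 : ℕ) : ℤ) + 1 := by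
      intro a
      have h := Nat.div_mul_cancel (Nat.even_mul_succ_self a).two_dvd
      have h' : (((a * (a + 1) / 2 : ℕ) : ℤ)) * 2 = a * (a + 1) := by exact_mod_cast h
      linear_combination -4 * h'
    rw [key, key, key]
    simp only [V, Set.mem_ofPred_eq]
    omega
  have hsgn : ∀ a : ℤ, a % 2 = 1 → ∃ s ∈ sgn, ∃ k : ℕ, a = s * (2 * k + 1) := by
    intro a ha
    rcases le_total 0 a with h | h
    · exact ⟨1, by simp [sgn], (a / 2).toNat, by omega⟩
    · exact ⟨-1, by simp [sgn], (-a / 2).toNat, by omega⟩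
  have hsq : ∀ s ∈ sgn, s ^ 2 = 1 := by
    rintro s (rfl | rfl) <;> norm_num
  have hinj : ∀ s ∈ sgn, ∀ s' ∈ sgn, ∀ k k' : ℕ, s * (2 * (k : ℤ) + 1) = s' * (2 * k' + 1) →
      s = s' ∧ k = k' := by
    rintro s (rfl | rfl) s' (rfl | rfl) k k' h <;> omega
  have hodd : ∀ s ∈ sgn, ∀ k : ℕ, s * (2 * (k : ℤ) + 1) % 2 = 1 := by
    rintro s (rfl | rfl) k <;> omega
  have hf : Set.BijOn f (sgn ×ˢ sgn ×ˢ sgn ×ˢ V) (oddSol (8 * n + 58)) := by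
    refine ⟨?_, ?_, ?_⟩
    · rintro ⟨r, s, t, x, y, z⟩ ⟨hr, hs, ht, h⟩
      refine ⟨?_, hodd r hr x, hodd s hs y, hodd t ht z⟩
      simp only [f, mul_pow, hsq r hr, hsq s hs, hsq t ht, one_mul]
      exact (hV x y z).1 h
    · rintro ⟨r, s, t, x, y, z⟩ ⟨hr, hs, ht, h⟩ ⟨r', s', t', x', y', z'⟩ ⟨hr', hs', ht', h'⟩ heq
      simp only [f, Prod.mk.injEq] at heq
      obtain ⟨rfl, rfl⟩ := hinj r hr r' hr' x x' heq.1
      obtain ⟨rfl, rfl⟩ := hinj s hs s' hs' y y' heq.2.1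
      obtain ⟨rfl, rfl⟩ := hinj t ht t' ht' z z' heq.2.2
      rfl
    · rintro ⟨a, b, c⟩ ⟨h, ha, hb, hc⟩
      obtain ⟨r, hr, x, rfl⟩ := hsgn a ha
      obtain ⟨s, hs, y, rfl⟩ := hsgn b hb
      obtain ⟨t, ht, z, rfl⟩ := hsgn c hc
      simp only [mul_pow, hsq r hr, hsq s hs, hsq t ht, one_mul] at h
      exact ⟨(r, s, t, x, y, z), ⟨hr, hs, ht, (hV x y z).2 h⟩, rfl⟩
  rw [hT, ← hf.image_eq, hf.injOn.ncard_image, Set.ncard_prod, Set.ncard_prod,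
    Set.ncard_prod, ncard_sgn]
  ring

theorem stmt_8 (n : ℕ) (hn : 0 < n) (hpar : Even n) :
    (16 * T 3 10 45 n : ℤ) = (N 3 10 45 (4 * (8 * n + 58)) : ℤ) - (N 3 10 45 (8 * n + 58) : ℤ) := by
  have hm : (8 * n + 58 : ℤ) % 16 = 10 := by
    obtain ⟨k, rfl⟩ := hpar
    omega
  have h1 := eight_mul_T n
  rw [ncard_oddSol hm] at h1
  have h2 := ncard_sol_four_mul hm
  rw [N_eq_ncard, N_eq_ncard]
  push_cast
  rw [h2]
  push_cast
  omega
end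

section
/- For every even positive integer n, 16·T(3,6,45;n) = N(3,6,45;4(8n+54)) − N(3,6,45;8n+54). -/
/-- The number of integer triples satisfying `P` (`0` if there are infinitely many). -/
noncomputable def cnt (P : ℤ → ℤ → ℤ → Prop) : ℕ :=
  Nat.card {p : ℤ × ℤ × ℤ // P p.1 p.2.1 p.2.2}

lemma cnt_bij {P Q : ℤ → ℤ → ℤ → Prop} (f g : ℤ → ℤ → ℤ → ℤ × ℤ × ℤ)
    (hf : ∀ x y z, P x y z → Q (f x y z).1 (f x y z).2.1 (f x y z).2.2)
    (hg : ∀ x y z, Q x y z → P (g x y z).1 (g x y z).2.1 (g x y z).2.2)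
    (hgf : ∀ x y z, P x y z → g (f x y z).1 (f x y z).2.1 (f x y z).2.2 = (x, y, z))
    (hfg : ∀ x y z, Q x y z → f (g x y z).1 (g x y z).2.1 (g x y z).2.2 = (x, y, z)) :
    cnt P = cnt Q :=
  Nat.card_congr
    { toFun := fun p => ⟨f p.1.1 p.1.2.1 p.1.2.2, hf _ _ _ p.2⟩
      invFun := fun p => ⟨g p.1.1 p.1.2.1 p.1.2.2, hg _ _ _ p.2⟩
      left_inv := fun p => Subtype.ext (hgf _ _ _ p.2)
      right_inv := fun p => Subtype.ext (hfg _ _ _ p.2) }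

lemma cnt_congr {P Q : ℤ → ℤ → ℤ → Prop} (h : ∀ x y z, P x y z ↔ Q x y z) : cnt P = cnt Q :=
  cnt_bij (fun x y z => (x, y, z)) (fun x y z => (x, y, z)) (fun x y z => (h x y z).1)
    (fun x y z => (h x y z).2) (fun _ _ _ _ => rfl) (fun _ _ _ _ => rfl)

lemma finite_of_bound {P : ℤ → ℤ → ℤ → Prop} (B : ℤ)
    (h : ∀ x y z, P x y z → x ^ 2 + y ^ 2 + z ^ 2 ≤ B) :
    Finite {p : ℤ × ℤ × ℤ // P p.1 p.2.1 p.2.2} := by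
  have key : ({p : ℤ × ℤ × ℤ | P p.1 p.2.1 p.2.2}).Finite := by
    apply Set.Finite.subset (Set.finite_Icc ((-B, -B, -B) : ℤ × ℤ × ℤ) (B, B, B))
    rintro ⟨x, y, z⟩ hp
    have := h x y z hp
    have hx := Int.le_self_sq x
    have hy := Int.le_self_sq y
    have hz := Int.le_self_sq z
    have hx' := Int.le_self_sq (-x)
    have hy' := Int.le_self_sq (-y)
    have hz' := Int.le_self_sq (-z)
    simp only [neg_sq] at hx' hy' hz'
    have := sq_nonneg x
    have := sq_nonneg y
    have := sq_nonneg z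
    simp only [Set.mem_Icc, Prod.mk_le_mk]
    refine ⟨⟨?_, ?_, ?_⟩, ?_, ?_, ?_⟩ <;> linarith
  exact key.to_subtype

lemma cnt_split {P : ℤ → ℤ → ℤ → Prop} (c : ℤ → ℤ → ℤ → Prop) (B : ℤ)
    (h : ∀ x y z, P x y z → x ^ 2 + y ^ 2 + z ^ 2 ≤ B) :
    cnt P = cnt (fun x y z => P x y z ∧ c x y z) + cnt (fun x y z => P x y z ∧ ¬ c x y z) := by
  classical
  have h1 := finite_of_bound (P := fun x y z => P x y z ∧ c x y z) B
    (fun x y z hp => h x y z hp.1)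
  have h2 := finite_of_bound (P := fun x y z => P x y z ∧ ¬ c x y z) B
    (fun x y z hp => h x y z hp.1)
  unfold cnt
  rw [← Nat.card_sum]
  refine Nat.card_congr ((Equiv.sumCompl
    (fun p : {p : ℤ × ℤ × ℤ // P p.1 p.2.1 p.2.2} => c p.1.1 p.1.2.1 p.1.2.2)).symm.trans ?_)
  exact Equiv.sumCongr
    (Equiv.subtypeSubtypeEquivSubtypeInter (fun p : ℤ × ℤ × ℤ => P p.1 p.2.1 p.2.2)
      (fun p => c p.1 p.2.1 p.2.2))
    (Equiv.subtypeSubtypeEquivSubtypeInter (fun p : ℤ × ℤ × ℤ => P p.1 p.2.1 p.2.2)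
      (fun p => ¬ c p.1 p.2.1 p.2.2))

/-- A condition `c` that is exchanged with its negation by a change of signs preserving `P` selects
exactly half of the solutions of `P`. -/
lemma cnt_half {P : ℤ → ℤ → ℤ → Prop} (c : ℤ → ℤ → ℤ → Prop) (B : ℤ)
    (h : ∀ x y z, P x y z → x ^ 2 + y ^ 2 + z ^ 2 ≤ B)
    (e₁ e₂ e₃ : ℤ) (h₁ : e₁ * e₁ = 1) (h₂ : e₂ * e₂ = 1) (h₃ : e₃ * e₃ = 1)
    (hP : ∀ x y z, P x y z → P (e₁ * x) (e₂ * y) (e₃ * z))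
    (hc : ∀ x y z, P x y z → (c (e₁ * x) (e₂ * y) (e₃ * z) ↔ ¬ c x y z)) :
    cnt P = 2 * cnt (fun x y z => P x y z ∧ c x y z) := by
  rw [cnt_split c B h, two_mul]
  congr 1
  refine cnt_bij (fun x y z => (e₁ * x, e₂ * y, e₃ * z)) (fun x y z => (e₁ * x, e₂ * y, e₃ * z))
    ?_ ?_ ?_ ?_
  · exact fun x y z hp => ⟨hP _ _ _ hp.1, (hc _ _ _ hp.1).2 hp.2⟩
  · exact fun x y z hp => ⟨hP _ _ _ hp.1, fun h' => (hc _ _ _ hp.1).1 h' hp.2⟩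
  all_goals
    intro x y z _
    simp only [← mul_assoc, h₁, h₂, h₃, one_mul]

/-! ### Congruences -/

lemma sq_mod_sixteen (x : ℤ) (h : x % 2 = 1) : x ^ 2 % 16 = 1 ∨ x ^ 2 % 16 = 9 := by
  have h8 : x % 8 = 1 ∨ x % 8 = 3 ∨ x % 8 = 5 ∨ x % 8 = 7 := by omega
  obtain ⟨k, hk⟩ : ∃ k, k = x / 8 := ⟨_, rfl⟩
  rcases h8 with h | h | h | h
  · have e : x = 8 * k + 1 := by omega
    have : x ^ 2 = 16 * (4 * k ^ 2 + k) + 1 := by rw [e]; ring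
    omega
  · have e : x = 8 * k + 3 := by omega
    have : x ^ 2 = 16 * (4 * k ^ 2 + 3 * k) + 9 := by rw [e]; ring
    omega
  · have e : x = 8 * k + 5 := by omega
    have : x ^ 2 = 16 * (4 * k ^ 2 + 5 * k + 1) + 9 := by rw [e]; ring
    omega
  · have e : x = 8 * k + 7 := by omega
    have : x ^ 2 = 16 * (4 * k ^ 2 + 7 * k + 3) + 1 := by rw [e]; ring
    omega

lemma sq_mod_eight (x : ℤ) (h : x % 2 = 1) : x ^ 2 % 8 = 1 := by
  have := sq_mod_sixteen x h
  omega

lemma sq_even (x : ℤ) (h : x % 2 = 0) : x ^ 2 % 4 = 0 := by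
  obtain ⟨k, hk⟩ : ∃ k, x = 2 * k := ⟨x / 2, by omega⟩
  have : x ^ 2 = 4 * k ^ 2 := by rw [hk]; ring
  omega

/-- The residue of an odd square modulo `16` determines the root modulo `8` up to sign. -/
lemma sq_mod_sixteen_eq_one (x : ℤ) (h : x % 2 = 1) :
    x ^ 2 % 16 = 1 ↔ (x % 8 = 1 ∨ x % 8 = 7) := by
  obtain ⟨k, hk⟩ : ∃ k, k = x / 8 := ⟨_, rfl⟩
  have h8 : x % 8 = 1 ∨ x % 8 = 3 ∨ x % 8 = 5 ∨ x % 8 = 7 := by omega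
  rcases h8 with h | h | h | h
  · have e : x = 8 * k + 1 := by omega
    have : x ^ 2 = 16 * (4 * k ^ 2 + k) + 1 := by rw [e]; ring
    omega
  · have e : x = 8 * k + 3 := by omega
    have : x ^ 2 = 16 * (4 * k ^ 2 + 3 * k) + 9 := by rw [e]; ring
    omega
  · have e : x = 8 * k + 5 := by omega
    have : x ^ 2 = 16 * (4 * k ^ 2 + 5 * k + 1) + 9 := by rw [e]; ring
    omega
  · have e : x = 8 * k + 7 := by omega
    have : x ^ 2 = 16 * (4 * k ^ 2 + 7 * k + 3) + 1 := by rw [e]; ring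
    omega

lemma congr_eight_of_sq (x z : ℤ) (hx : x % 2 = 1) (hz : z % 2 = 1)
    (h : (x ^ 2 + 15 * z ^ 2) % 16 = 0) : (x - z) % 8 = 0 ∨ (x + z) % 8 = 0 := by
  have := sq_mod_sixteen_eq_one x hx
  have := sq_mod_sixteen_eq_one z hz
  have := sq_mod_sixteen x hx
  have := sq_mod_sixteen z hz
  omega

lemma congr_eight_of_sq' (x z : ℤ) (hx : x % 2 = 1) (hz : z % 2 = 1)
    (h : (x ^ 2 + 15 * z ^ 2) % 16 = 8) : (x + 3 * z) % 8 = 0 ∨ (x - 3 * z) % 8 = 0 := by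
  have h1 := sq_mod_sixteen_eq_one x hx
  have h2 := sq_mod_sixteen_eq_one z hz
  have h3 := sq_mod_sixteen x hx
  have h4 := sq_mod_sixteen z hz
  by_cases hx1 : x ^ 2 % 16 = 1
  · have hx8 := h1.1 hx1
    have hz' : ¬ (z % 8 = 1 ∨ z % 8 = 7) := fun h' => by have := h2.2 h'; omega
    have hz8 : z % 8 = 3 ∨ z % 8 = 5 := by omega
    rcases hx8 with hx8 | hx8 <;> rcases hz8 with hz8 | hz8 <;> omega
  · have hx' : ¬ (x % 8 = 1 ∨ x % 8 = 7) := fun h' => hx1 (h1.2 h')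
    have hx8 : x % 8 = 3 ∨ x % 8 = 5 := by omega
    have hz8 := h2.1 (by omega)
    rcases hx8 with hx8 | hx8 <;> rcases hz8 with hz8 | hz8 <;> omega

/-! ### The isometries -/

/-- Odd solutions of `x² + 2y² + 15z² = 2M`. -/
def OddSol (M x y z : ℤ) : Prop :=
  x ^ 2 + 2 * y ^ 2 + 15 * z ^ 2 = 2 * M ∧ x % 2 = 1 ∧ y % 2 = 1 ∧ z % 2 = 1

/-- Odd solutions of `y² + 5s² + 3d² = M`. -/
def AuxSol (M y s d : ℤ) : Prop :=
  y ^ 2 + 5 * s ^ 2 + 3 * d ^ 2 = M ∧ y % 2 = 1 ∧ s % 2 = 1 ∧ d % 2 = 1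

/-- Solutions of `5s² + 4y² + 12t² = M`. -/
def EvenSol (M s y t : ℤ) : Prop := 5 * s ^ 2 + 4 * y ^ 2 + 12 * t ^ 2 = M

/-- Odd solutions of `x² + 8y² + 15z² = 8M`. -/
def OddY (M x y z : ℤ) : Prop :=
  x ^ 2 + 8 * y ^ 2 + 15 * z ^ 2 = 8 * M ∧ x % 2 = 1 ∧ y % 2 = 1 ∧ z % 2 = 1

/-- Solutions of `x² + 32y² + 15z² = 8M` with `x`, `z` odd: the solutions of
`x² + 8y'² + 15z² = 8M` with `x`, `z` odd and `y' = 2y` even. -/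
def EvenY (M x y z : ℤ) : Prop :=
  x ^ 2 + 32 * y ^ 2 + 15 * z ^ 2 = 8 * M ∧ x % 2 = 1 ∧ z % 2 = 1

lemma aux_half (M : ℤ) :
    cnt (AuxSol M) = 2 * cnt (fun y s d => AuxSol M y s d ∧ (s - d) % 4 = 2) := by
  refine cnt_half _ M ?_ 1 1 (-1) rfl rfl rfl ?_ ?_
  · rintro x y z ⟨h, -⟩
    nlinarith [sq_nonneg x, sq_nonneg y, sq_nonneg z]
  · rintro x y z ⟨h, h1, h2, h3⟩
    exact ⟨by linear_combination h, by omega, by omega, by omega⟩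
  · rintro x y z ⟨h, h1, h2, h3⟩
    omega

lemma odd_eq_aux (M : ℤ) (hM : M % 8 = 1) : cnt (OddSol M) = cnt (AuxSol M) := by
  have key : ∀ x y z, OddSol M x y z → (x - z) % 8 = 0 ∨ (x + z) % 8 = 0 := by
    rintro x y z ⟨h, h1, h2, h3⟩
    apply congr_eight_of_sq x z h1 h3
    have := sq_mod_eight y h2
    omega
  rw [aux_half, cnt_half (P := OddSol M) (fun x _ z => (x - z) % 8 = 0) (2 * M) ?_ 1 1 (-1)
    rfl rfl rfl ?_ ?_]
  · congr 1
    refine cnt_bij (fun x y z => (y, (x + 3 * z) / 4, (x - 5 * z) / 4))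
      (fun y s d => ((5 * s + 3 * d) / 2, y, (s - d) / 2)) ?_ ?_ ?_ ?_
    · rintro x y z ⟨⟨h, h1, h2, h3⟩, h4⟩
      obtain ⟨k, rfl⟩ : ∃ k, x = z + 8 * k := ⟨(x - z) / 8, by omega⟩
      have e1 : (z + 8 * k + 3 * z) / 4 = z + 2 * k := by omega
      have e2 : (z + 8 * k - 5 * z) / 4 = - z + 2 * k := by omega
      simp only [e1, e2]
      refine ⟨⟨by linarith, by omega, by omega, by omega⟩, by omega⟩
    · rintro y s d ⟨⟨h, h1, h2, h3⟩, h4⟩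
      obtain ⟨k, rfl⟩ : ∃ k, s = d + 2 + 4 * k := ⟨(s - d) / 4, by omega⟩
      have e1 : (5 * (d + 2 + 4 * k) + 3 * d) / 2 = 4 * d + 5 + 10 * k := by omega
      have e2 : (d + 2 + 4 * k - d) / 2 = 1 + 2 * k := by omega
      simp only [e1, e2]
      refine ⟨⟨by linarith, by omega, by omega, by omega⟩, by omega⟩
    · rintro x y z ⟨⟨h, h1, h2, h3⟩, h4⟩
      refine Prod.ext ?_ (Prod.ext ?_ ?_) <;> simp only <;> omega
    · rintro x y z ⟨⟨h, h1, h2, h3⟩, h4⟩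
      refine Prod.ext ?_ (Prod.ext ?_ ?_) <;> simp only <;> omega
  · rintro x y z ⟨h, -⟩
    nlinarith [sq_nonneg x, sq_nonneg y, sq_nonneg z]
  · rintro x y z ⟨h, h1, h2, h3⟩
    exact ⟨by linear_combination h, by omega, by omega, by omega⟩
  · intro x y z hp
    have := key x y z hp
    obtain ⟨h, h1, h2, h3⟩ := hp
    omega

/-- The equation modulo `64` sharpens `x ≡ z mod 8` to a congruence modulo `32`. -/
lemma oddY_congr (M x y z : ℤ) (hM : M % 8 = 1) (hp : OddY M x y z) (h8 : (x - z) % 8 = 0) :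
    (x + 7 * z) % 32 = 0 := by
  obtain ⟨h, h1, h2, h3⟩ := hp
  obtain ⟨k, rfl⟩ : ∃ k, x = z + 8 * k := ⟨(x - z) / 8, by omega⟩
  have hy := sq_mod_eight y h2
  -- the equation gives `z (z + k) ≡ 0 mod 4`
  obtain ⟨a, rfl⟩ : ∃ a, z = 2 * a + 1 := ⟨z / 2, by omega⟩
  have hk : k % 2 = 1 := by
    have : 16 * (4 * (a ^ 2 + a) + 1 + 2 * (a * k) + k) + 64 * k ^ 2 + 8 * y ^ 2 = 8 * M := by
      linarith
    omega
  obtain ⟨b, rfl⟩ : ∃ b, k = 2 * b + 1 := ⟨k / 2, by omega⟩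
  have : 16 * (4 * (a ^ 2 + a) + 1 + 4 * (a * b) + 2 * a + 2 * b + 1)
      + 64 * (2 * b + 1) ^ 2 + 8 * y ^ 2 = 8 * M := by linarith
  omega

lemma oddY_eq_aux (M : ℤ) (hM : M % 8 = 1) : cnt (OddY M) = cnt (AuxSol M) := by
  have key : ∀ x y z, OddY M x y z → (x - z) % 8 = 0 ∨ (x + z) % 8 = 0 := by
    rintro x y z ⟨h, h1, h2, h3⟩
    apply congr_eight_of_sq x z h1 h3
    have := sq_mod_eight y h2
    omega
  rw [aux_half, cnt_half (P := OddY M) (fun x _ z => (x - z) % 8 = 0) (8 * M) ?_ 1 1 (-1)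
    rfl rfl rfl ?_ ?_]
  · congr 1
    refine cnt_bij (fun x y z => (y, (9 * z - x) / 16, (5 * z + 3 * x) / 16))
      (fun y s d => ((9 * d - 5 * s) / 2, y, (3 * s + d) / 2)) ?_ ?_ ?_ ?_
    · rintro x y z ⟨hp, h4⟩
      have h5 := oddY_congr M x y z hM hp h4
      obtain ⟨h, h1, h2, h3⟩ := hp
      obtain ⟨k, rfl⟩ : ∃ k, x = - (7 * z) + 32 * k := ⟨(x + 7 * z) / 32, by omega⟩
      have e1 : (9 * z - (- (7 * z) + 32 * k)) / 16 = z - 2 * k := by omega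
      have e2 : (5 * z + 3 * (- (7 * z) + 32 * k)) / 16 = - z + 6 * k := by omega
      simp only [e1, e2]
      refine ⟨⟨by linarith, by omega, by omega, by omega⟩, by omega⟩
    · rintro y s d ⟨⟨h, h1, h2, h3⟩, h4⟩
      obtain ⟨k, rfl⟩ : ∃ k, s = d + 2 + 4 * k := ⟨(s - d) / 4, by omega⟩
      have e1 : (9 * d - 5 * (d + 2 + 4 * k)) / 2 = 2 * d - 5 - 10 * k := by omega
      have e2 : (3 * (d + 2 + 4 * k) + d) / 2 = 2 * d + 3 + 6 * k := by omega
      simp only [e1, e2]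
      refine ⟨⟨by linarith, by omega, by omega, by omega⟩, by omega⟩
    · rintro x y z ⟨hp, h4⟩
      have h5 := oddY_congr M x y z hM hp h4
      refine Prod.ext ?_ (Prod.ext ?_ ?_) <;> simp only <;> omega
    · rintro x y z ⟨⟨h, h1, h2, h3⟩, h4⟩
      refine Prod.ext ?_ (Prod.ext ?_ ?_) <;> simp only <;> omega
  · rintro x y z ⟨h, -⟩
    nlinarith [sq_nonneg x, sq_nonneg y, sq_nonneg z]
  · rintro x y z ⟨h, h1, h2, h3⟩
    exact ⟨by linear_combination h, by omega, by omega, by omega⟩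
  · intro x y z hp
    have := key x y z hp
    obtain ⟨h, h1, h2, h3⟩ := hp
    omega

lemma evenSol_parity (M s y t : ℤ) (hM : M % 8 = 1) (h : EvenSol M s y t) :
    s % 2 = 1 ∧ (y + t) % 2 = 1 := by
  unfold EvenSol at h
  have hs : s % 2 = 1 := by
    by_contra hs
    have := sq_even s (by omega)
    omega
  have := sq_mod_eight s hs
  rcases Int.emod_two_eq_zero_or_one y with hy | hy <;>
    rcases Int.emod_two_eq_zero_or_one t with ht | ht
  · have := sq_even y hy
    have := sq_even t ht
    omega
  · omega
  · omega
  · have := sq_mod_eight y hy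
    have := sq_mod_eight t ht
    omega

/-- An element of norm `4m`, `m` odd, of the Eisenstein integers has three associates up to sign;
one of them is twice an element of `ℤ[√-3]`, the other two have odd coordinates. -/
lemma aux_eq_even (M : ℤ) (hM : M % 8 = 1) : cnt (AuxSol M) = 2 * cnt (EvenSol M) := by
  rw [cnt_half (P := AuxSol M) (fun y _ d => (y - d) % 4 = 0) M ?_ 1 1 (-1) rfl rfl rfl ?_ ?_]
  · congr 1
    refine cnt_bij (fun y s d => (s, (y + 3 * d) / 4, (y - d) / 4))
      (fun s y t => (y + 3 * t, s, y - t)) ?_ ?_ ?_ ?_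
    · rintro y s d ⟨⟨h, h1, h2, h3⟩, h4⟩
      obtain ⟨k, rfl⟩ : ∃ k, y = d + 4 * k := ⟨(y - d) / 4, by omega⟩
      have e1 : (d + 4 * k + 3 * d) / 4 = d + k := by omega
      have e2 : (d + 4 * k - d) / 4 = k := by omega
      simp only [e1, e2]
      unfold EvenSol
      linarith
    · intro s y t h
      obtain ⟨h1, h2⟩ := evenSol_parity M s y t hM h
      unfold EvenSol at h
      refine ⟨⟨?_, ?_, h1, ?_⟩, ?_⟩
      · simp only
        linarith
      all_goals
        simp only
        omega
    · rintro x y z ⟨⟨h, h1, h2, h3⟩, h4⟩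
      refine Prod.ext ?_ (Prod.ext ?_ ?_) <;> simp only <;> omega
    · rintro x y z h
      refine Prod.ext ?_ (Prod.ext ?_ ?_) <;> simp only <;> omega
  · rintro x y z ⟨h, -⟩
    nlinarith [sq_nonneg x, sq_nonneg y, sq_nonneg z]
  · rintro x y z ⟨h, h1, h2, h3⟩
    exact ⟨by linear_combination h, by omega, by omega, by omega⟩
  · rintro x y z ⟨h, h1, h2, h3⟩
    omega

/-- The equation modulo `64` sharpens `x ≡ -3z mod 8` to a congruence modulo `16`. -/
lemma evenY_congr (M x y z : ℤ) (hM : M % 8 = 1) (hp : EvenY M x y z)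
    (h8 : (x + 3 * z) % 8 = 0) : (x - 5 * z) % 16 = 0 := by
  obtain ⟨h, h1, h3⟩ := hp
  obtain ⟨k, rfl⟩ : ∃ k, x = - (3 * z) + 8 * k := ⟨(x + 3 * z) / 8, by omega⟩
  have hz := sq_mod_eight z h3
  -- dividing by `8`: `3z² - 6kz + 4y² ≡ 1 mod 8`, so `k` is odd
  have e : 3 * z ^ 2 - 6 * (k * z) + 8 * k ^ 2 + 4 * y ^ 2 = M := by linarith
  have hk : k % 2 = 1 := by
    by_contra hk
    obtain ⟨b, rfl⟩ : ∃ b, k = 2 * b := ⟨k / 2, by omega⟩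
    have : 3 * z ^ 2 - 12 * (b * z) + 8 * (2 * b) ^ 2 + 4 * y ^ 2 = M := by linarith
    omega
  omega

lemma evenY_eq_aux (M : ℤ) (hM : M % 8 = 1) : cnt (EvenY M) = cnt (AuxSol M) := by
  have key : ∀ x y z, EvenY M x y z → (x + 3 * z) % 8 = 0 ∨ (x - 3 * z) % 8 = 0 := by
    rintro x y z ⟨h, h1, h3⟩
    apply congr_eight_of_sq' x z h1 h3
    omega
  rw [aux_eq_even M hM, cnt_half (P := EvenY M) (fun x _ z => (x + 3 * z) % 8 = 0) (8 * M) ?_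
    1 1 (-1) rfl rfl rfl ?_ ?_]
  · congr 1
    refine cnt_bij (fun x y z => ((x + 3 * z) / 8, y, (x - 5 * z) / 16))
      (fun s y t => (5 * s + 6 * t, y, s - 2 * t)) ?_ ?_ ?_ ?_
    · rintro x y z ⟨hp, h4⟩
      have h5 := evenY_congr M x y z hM hp h4
      obtain ⟨h, h1, h3⟩ := hp
      obtain ⟨k, rfl⟩ : ∃ k, x = 5 * z + 16 * k := ⟨(x - 5 * z) / 16, by omega⟩
      have e1 : (5 * z + 16 * k + 3 * z) / 8 = z + 2 * k := by omega
      have e2 : (5 * z + 16 * k - 5 * z) / 16 = k := by omega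
      simp only [e1, e2]
      unfold EvenSol
      linarith
    · intro s y t h
      obtain ⟨h1, h2⟩ := evenSol_parity M s y t hM h
      unfold EvenSol at h
      refine ⟨⟨?_, ?_, ?_⟩, ?_⟩
      · simp only
        linarith
      all_goals
        simp only
        omega
    · rintro x y z ⟨hp, h4⟩
      have h5 := evenY_congr M x y z hM hp h4
      refine Prod.ext ?_ (Prod.ext ?_ ?_) <;> simp only <;> omega
    · rintro x y z h
      refine Prod.ext ?_ (Prod.ext ?_ ?_) <;> simp only <;> omega
  · rintro x y z ⟨h, -⟩
    nlinarith [sq_nonneg x, sq_nonneg y, sq_nonneg z]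
  · rintro x y z ⟨h, h1, h3⟩
    exact ⟨by linear_combination h, by omega, by omega⟩
  · intro x y z hp
    have := key x y z hp
    obtain ⟨h, h1, h3⟩ := hp
    omega

/-! ### Sorting solutions by parity -/

/-- All integer solutions of `x² + 2y² + 15z² = m`. -/
def Sol (m x y z : ℤ) : Prop := x ^ 2 + 2 * y ^ 2 + 15 * z ^ 2 = m

lemma sol_even (M x y z : ℤ) (h : Sol (8 * M) x y z) (hx : x % 2 = 0) :
    y % 2 = 0 ∧ z % 2 = 0 := by
  unfold Sol at h
  have h1 := sq_even x hx
  have hz : z % 2 = 0 := by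
    by_contra hz
    have := sq_mod_eight z (by omega)
    omega
  have h2 := sq_even z hz
  refine ⟨?_, hz⟩
  by_contra hy
  have := sq_mod_eight y (by omega)
  omega

lemma sol_odd (M x y z : ℤ) (h : Sol (8 * M) x y z) (hx : x % 2 = 1) :
    y % 2 = 0 ∧ z % 2 = 1 := by
  unfold Sol at h
  have h1 := sq_mod_eight x hx
  have hz : z % 2 = 1 := by
    by_contra hz
    have := sq_even z (by omega)
    omega
  have h2 := sq_mod_eight z hz
  refine ⟨?_, hz⟩
  by_contra hy
  have := sq_mod_eight y (by omega)
  omega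

lemma sol_bound (m x y z : ℤ) (h : Sol m x y z) : x ^ 2 + y ^ 2 + z ^ 2 ≤ m := by
  unfold Sol at h
  nlinarith [sq_nonneg x, sq_nonneg y, sq_nonneg z]

lemma cnt_sol (M : ℤ) : cnt (Sol (8 * M)) = cnt (Sol (2 * M)) + (cnt (EvenY M) + cnt (OddY M)) := by
  rw [cnt_split (fun x _ _ => x % 2 = 0) (8 * M) (sol_bound _),
    cnt_split (P := fun x y z => Sol (8 * M) x y z ∧ ¬ x % 2 = 0) (fun _ y _ => y % 4 = 0) (8 * M)
      (fun x y z h => sol_bound _ _ _ _ h.1)]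
  congr 1
  · refine cnt_bij (fun x y z => (x / 2, y / 2, z / 2)) (fun x y z => (2 * x, 2 * y, 2 * z))
      ?_ ?_ ?_ ?_
    · rintro x y z ⟨h, hx⟩
      obtain ⟨hy, hz⟩ := sol_even M x y z h hx
      obtain ⟨a, rfl⟩ : ∃ a, x = 2 * a := ⟨x / 2, by omega⟩
      obtain ⟨b, rfl⟩ : ∃ b, y = 2 * b := ⟨y / 2, by omega⟩
      obtain ⟨c, rfl⟩ : ∃ c, z = 2 * c := ⟨z / 2, by omega⟩
      unfold Sol at *
      simp only [Int.mul_ediv_cancel_left _ (two_ne_zero : (2 : ℤ) ≠ 0)]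
      linarith
    · intro x y z h
      unfold Sol at *
      refine ⟨?_, ?_⟩
      · simp only
        linarith
      · simp only
        omega
    · rintro x y z ⟨h, hx⟩
      obtain ⟨hy, hz⟩ := sol_even M x y z h hx
      refine Prod.ext ?_ (Prod.ext ?_ ?_) <;> simp only <;> omega
    · intro x y z _
      refine Prod.ext ?_ (Prod.ext ?_ ?_) <;> simp only <;> omega
  congr 1
  · refine cnt_bij (fun x y z => (x, y / 4, z)) (fun x y z => (x, 4 * y, z)) ?_ ?_ ?_ ?_
    · rintro x y z ⟨⟨h, hx⟩, h4⟩
      obtain ⟨hy, hz⟩ := sol_odd M x y z h (by omega)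
      obtain ⟨b, rfl⟩ : ∃ b, y = 4 * b := ⟨y / 4, by omega⟩
      unfold Sol at h
      have e : 4 * b / 4 = b := by omega
      simp only [e]
      exact ⟨by linarith, by omega, hz⟩
    · rintro x y z ⟨h, h1, h2⟩
      refine ⟨⟨?_, ?_⟩, ?_⟩
      · simp only [Sol]
        linarith
      all_goals
        simp only
        omega
    · rintro x y z ⟨⟨h, hx⟩, h4⟩
      refine Prod.ext ?_ (Prod.ext ?_ ?_) <;> simp only <;> omega
    · intro x y z _
      refine Prod.ext ?_ (Prod.ext ?_ ?_) <;> simp only <;> omega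
  · refine cnt_bij (fun x y z => (x, y / 2, z)) (fun x y z => (x, 2 * y, z)) ?_ ?_ ?_ ?_
    · rintro x y z ⟨⟨h, hx⟩, h4⟩
      obtain ⟨hy, hz⟩ := sol_odd M x y z h (by omega)
      obtain ⟨b, rfl⟩ : ∃ b, y = 2 * b := ⟨y / 2, by omega⟩
      unfold Sol at h
      have e : 2 * b / 2 = b := by omega
      simp only [e]
      exact ⟨by linarith, by omega, by omega, hz⟩
    · rintro x y z ⟨h, h1, h2, h3⟩
      refine ⟨⟨?_, ?_⟩, ?_⟩
      · simp only [Sol]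
        linarith
      all_goals
        simp only
        omega
    · rintro x y z ⟨⟨h, hx⟩, h4⟩
      obtain ⟨hy, hz⟩ := sol_odd M x y z h (by omega)
      refine Prod.ext ?_ (Prod.ext ?_ ?_) <;> simp only <;> omega
    · intro x y z _
      refine Prod.ext ?_ (Prod.ext ?_ ?_) <;> simp only <;> omega

/-! ### Triangular numbers -/

lemma exists_tri (a : ℕ) : ∃ t : ℕ, a * (a + 1) / 2 = t ∧ ((2 * a + 1 : ℤ)) ^ 2 = 8 * t + 1 := by
  obtain ⟨t, ht⟩ := (Nat.even_mul_succ_self a).two_dvd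
  refine ⟨t, by omega, ?_⟩
  have : (a : ℤ) * (a + 1) = 2 * t := by exact_mod_cast ht
  linarith

/-- The triangular equation for `(a, b, c)` is the quadratic one for `(2a+1, 2b+1, 2c+1)`. -/
lemma tri_iff (j a b c : ℕ) :
    3 * (a * (a + 1) / 2) + 6 * (b * (b + 1) / 2) + 45 * (c * (c + 1) / 2) = 6 * j ↔
      (2 * a + 1 : ℤ) ^ 2 + 2 * (2 * b + 1 : ℤ) ^ 2 + 15 * (2 * c + 1 : ℤ) ^ 2
        = 2 * (8 * j + 9) := by
  obtain ⟨t, ht, ht'⟩ := exists_tri a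
  obtain ⟨u, hu, hu'⟩ := exists_tri b
  obtain ⟨v, hv, hv'⟩ := exists_tri c
  rw [ht, hu, hv, ht', hu', hv']
  omega

lemma eight_T (j : ℕ) : cnt (OddSol (8 * j + 9)) = 8 * T 3 6 45 (6 * j) := by
  have bound : ∀ x y z : ℤ, OddSol (8 * j + 9) x y z →
      x ^ 2 + y ^ 2 + z ^ 2 ≤ 2 * (8 * j + 9) := fun x y z h => sol_bound _ _ _ _ h.1
  rw [cnt_half (fun x _ _ => 0 < x) _ bound (-1) 1 1 rfl rfl rfl ?_ ?_,
    cnt_half (P := fun x y z => OddSol (8 * j + 9) x y z ∧ 0 < x) (fun _ y _ => 0 < y) _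
      (fun x y z h => bound x y z h.1) 1 (-1) 1 rfl rfl rfl ?_ ?_,
    cnt_half (P := fun x y z => (OddSol (8 * j + 9) x y z ∧ 0 < x) ∧ 0 < y) (fun _ _ z => 0 < z) _
      (fun x y z h => bound x y z h.1.1) 1 1 (-1) rfl rfl rfl ?_ ?_,
    ← mul_assoc, ← mul_assoc]
  · congr 1
    refine (Nat.card_congr ?_).symm
    refine
      { toFun := fun p => ⟨(2 * p.1.1 + 1, 2 * p.1.2.1 + 1, 2 * p.1.2.2 + 1), ?_⟩
        invFun := fun p => ⟨((p.1.1 / 2).toNat, (p.1.2.1 / 2).toNat, (p.1.2.2 / 2).toNat), ?_⟩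
        left_inv := ?_
        right_inv := ?_ }
    · have := (tri_iff j _ _ _).1 p.2
      refine ⟨⟨⟨⟨this, ?_, ?_, ?_⟩, ?_⟩, ?_⟩, ?_⟩
      all_goals
        simp only
        omega
    · obtain ⟨⟨x, y, z⟩, ⟨⟨⟨h, h1, h2, h3⟩, hx⟩, hy⟩, hz⟩ := p
      simp only at h h1 h2 h3 hx hy hz ⊢
      rw [tri_iff]
      have ex : 2 * ((x / 2).toNat : ℤ) + 1 = x := by omega
      have ey : 2 * ((y / 2).toNat : ℤ) + 1 = y := by omega
      have ez : 2 * ((z / 2).toNat : ℤ) + 1 = z := by omega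
      rw [ex, ey, ez]
      exact h
    · rintro ⟨⟨a, b, c⟩, h⟩
      simp only [Subtype.mk.injEq, Prod.mk.injEq]
      omega
    · rintro ⟨⟨x, y, z⟩, ⟨⟨⟨h, h1, h2, h3⟩, hx⟩, hy⟩, hz⟩
      simp only at h1 h2 h3 hx hy hz
      simp only [Subtype.mk.injEq, Prod.mk.injEq]
      omega
  · rintro x y z ⟨⟨⟨h, h1, h2, h3⟩, hx⟩, hy⟩
    exact ⟨⟨⟨by linear_combination h, by omega, by omega, by omega⟩, by omega⟩, by omega⟩
  · rintro x y z ⟨⟨⟨h, h1, h2, h3⟩, hx⟩, hy⟩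
    omega
  · rintro x y z ⟨⟨h, h1, h2, h3⟩, hx⟩
    exact ⟨⟨by linear_combination h, by omega, by omega, by omega⟩, by omega⟩
  · rintro x y z ⟨⟨h, h1, h2, h3⟩, hx⟩
    omega
  · rintro x y z ⟨h, h1, h2, h3⟩
    exact ⟨by linear_combination h, by omega, by omega, by omega⟩
  · rintro x y z ⟨h, h1, h2, h3⟩
    omega

lemma N_eq_cnt (m : ℕ) : N 3 6 45 (3 * m) = cnt (Sol m) := by
  refine cnt_congr (P := fun x y z => ((3 : ℕ) : ℤ) * x ^ 2 + ((6 : ℕ) : ℤ) * y ^ 2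
    + ((45 : ℕ) : ℤ) * z ^ 2 = ((3 * m : ℕ) : ℤ)) ?_
  intro x y z
  unfold Sol
  push_cast
  constructor <;> intro h <;> linarith

lemma N_eq_zero (m : ℕ) (h : ¬ 3 ∣ m) : N 3 6 45 m = 0 := by
  have : IsEmpty {p : ℤ × ℤ × ℤ // ((3 : ℕ) : ℤ) * p.1 ^ 2 + ((6 : ℕ) : ℤ) * p.2.1 ^ 2
      + ((45 : ℕ) : ℤ) * p.2.2 ^ 2 = (m : ℤ)} := by
    refine ⟨fun p => ?_⟩
    have := p.2
    omega
  exact Nat.card_of_isEmpty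

lemma T_eq_zero (m : ℕ) (h : ¬ 3 ∣ m) : T 3 6 45 m = 0 := by
  have : IsEmpty {p : ℕ × ℕ × ℕ // 3 * (p.1 * (p.1 + 1) / 2) + 6 * (p.2.1 * (p.2.1 + 1) / 2)
      + 45 * (p.2.2 * (p.2.2 + 1) / 2) = m} := by
    refine ⟨fun p => ?_⟩
    have := p.2
    omega
  exact Nat.card_of_isEmpty

theorem stmt_9 (n : ℕ) (hn : 0 < n) (hpar : Even n) :
    (16 * T 3 6 45 n : ℤ) = (N 3 6 45 (4 * (8 * n + 54)) : ℤ) - (N 3 6 45 (8 * n + 54) : ℤ) := by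
  by_cases h3 : 3 ∣ n
  · obtain ⟨j, rfl⟩ : ∃ j, n = 6 * j := by
      obtain ⟨r, hr⟩ := hpar
      exact ⟨n / 6, by omega⟩
    have hM : (8 * (j : ℤ) + 9) % 8 = 1 := by omega
    have e1 : 4 * (8 * (6 * j) + 54) = 3 * (8 * (8 * j + 9)) := by ring
    have e2 : 8 * (6 * j) + 54 = 3 * (2 * (8 * j + 9)) := by ring
    have hT := eight_T j
    have hS := cnt_sol (8 * j + 9)
    rw [evenY_eq_aux _ hM, oddY_eq_aux _ hM, ← odd_eq_aux _ hM, hT] at hS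
    rw [e1, e2, N_eq_cnt, N_eq_cnt]
    push_cast
    rw [hS]
    push_cast
    ring
  · rw [T_eq_zero n h3, N_eq_zero _ (by omega), N_eq_zero _ (by omega)]
    simp
end

section
/- For every odd positive integer n, 16·T(1,6,7;n) = N(1,6,7;4(8n+14)) − N(1,6,7;8n+14). -/
namespace Stmt10

/-! ### Counting tools -/

lemma finite_of_form (a b c : ℤ) (ha : 0 < a) (hb : 0 < b) (hc : 0 < c) (k : ℤ) :
    {p : ℤ × ℤ × ℤ | a * p.1 ^ 2 + b * p.2.1 ^ 2 + c * p.2.2 ^ 2 = k}.Finite := by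
  have key : ∀ (t x : ℤ), 0 < t → t * x ^ 2 ≤ k → x ∈ Set.Icc (-k) k := by
    intro t x ht h
    have h1 : x ^ 2 ≤ k := by nlinarith [sq_nonneg x]
    constructor <;> nlinarith [sq_nonneg (x - 1), sq_nonneg (x + 1), sq_nonneg x]
  refine ((Set.finite_Icc (-k) k).prod
    ((Set.finite_Icc (-k) k).prod (Set.finite_Icc (-k) k))).subset ?_
  rintro ⟨x, y, z⟩ h
  simp only [Set.mem_ofPred_eq] at h
  have hx := mul_nonneg ha.le (sq_nonneg x)
  have hy := mul_nonneg hb.le (sq_nonneg y)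
  have hz := mul_nonneg hc.le (sq_nonneg z)
  exact ⟨key a x ha (by linarith), key b y hb (by linarith), key c z hc (by linarith)⟩

lemma ncard_eq_of_inverse {α β : Type*} {s : Set α} {t : Set β} (f : α → β) (g : β → α)
    (hf : ∀ a ∈ s, f a ∈ t ∧ g (f a) = a) (hg : ∀ b ∈ t, g b ∈ s ∧ f (g b) = b) :
    s.ncard = t.ncard :=
  Set.ncard_congr (fun a _ => f a) (fun a ha => (hf a ha).1)
    (fun a b ha hb h => by rw [← (hf a ha).2, ← (hf b hb).2]; exact congrArg g h)
    (fun b hb => ⟨g b, (hg b hb).1, (hg b hb).2⟩)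

lemma ncard_split {α : Type*} {s : Set α} (hs : s.Finite) (P : α → Prop) :
    s.ncard = {a ∈ s | P a}.ncard + {a ∈ s | ¬ P a}.ncard := by
  rw [← Set.ncard_union_eq _ (hs.subset (Set.sep_subset _ _)) (hs.subset (Set.sep_subset _ _))]
  · congr 1
    ext a
    simp only [Set.mem_union, Set.mem_ofPred_eq]
    tauto
  · rw [Set.disjoint_left]
    rintro a ⟨_, h⟩ ⟨_, hn⟩
    exact hn h

/-- An involution of a finite set that exchanges a predicate with its negation shows that exactly
half of the elements satisfy the predicate. -/
lemma ncard_eq_two_mul {α : Type*} {s : Set α} (hs : s.Finite) (P : α → Prop) (f : α → α)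
    (hinv : ∀ a, f (f a) = a) (hf : ∀ a ∈ s, f a ∈ s ∧ (P (f a) ↔ ¬ P a)) :
    s.ncard = 2 * {a ∈ s | P a}.ncard := by
  have h : {a ∈ s | P a}.ncard = {a ∈ s | ¬ P a}.ncard := by
    refine ncard_eq_of_inverse f f ?_ ?_
    · rintro a ⟨ha, hp⟩
      exact ⟨⟨(hf a ha).1, fun h => (hf a ha).2.1 h hp⟩, hinv a⟩
    · rintro a ⟨ha, hp⟩
      exact ⟨⟨(hf a ha).1, (hf a ha).2.2 hp⟩, hinv a⟩
  rw [ncard_split hs P]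
  omega

/-! ### The solution sets -/

/-- Solutions of `x² + 6y² + 7z² = 2K` with all entries odd. -/
def R (K : ℤ) : Set (ℤ × ℤ × ℤ) :=
  {p | Odd p.1 ∧ Odd p.2.1 ∧ Odd p.2.2 ∧ p.1 ^ 2 + 6 * p.2.1 ^ 2 + 7 * p.2.2 ^ 2 = 2 * K}

/-- Solutions of `x² + 24w² + 7z² = 8K` with `x` and `z` odd. -/
def S (K : ℤ) : Set (ℤ × ℤ × ℤ) :=
  {p | Odd p.1 ∧ Odd p.2.2 ∧ p.1 ^ 2 + 24 * p.2.1 ^ 2 + 7 * p.2.2 ^ 2 = 8 * K}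

/-- Solutions of `x² + 12v² + 7z² = K`. -/
def A (K : ℤ) : Set (ℤ × ℤ × ℤ) :=
  {p | p.1 ^ 2 + 12 * p.2.1 ^ 2 + 7 * p.2.2 ^ 2 = K}

/-- Solutions of `x² + 3w² + 7z² = K` with all entries odd. -/
def C (K : ℤ) : Set (ℤ × ℤ × ℤ) :=
  {p | Odd p.1 ∧ Odd p.2.1 ∧ Odd p.2.2 ∧ p.1 ^ 2 + 3 * p.2.1 ^ 2 + 7 * p.2.2 ^ 2 = K}

/-- The condition `x ≡ z (mod 4)`; for odd `x, z` it says which of the two primes above `2` in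
`ℚ(√-7)` divides `(x + z√-7)/2`. -/
def Plus (p : ℤ × ℤ × ℤ) : Prop := (4 : ℤ) ∣ p.1 - p.2.2

lemma finite_R (K : ℤ) : (R K).Finite :=
  (finite_of_form 1 6 7 (by norm_num) (by norm_num) (by norm_num) (2 * K)).subset
    fun p hp => by simpa using hp.2.2.2

lemma finite_S (K : ℤ) : (S K).Finite :=
  (finite_of_form 1 24 7 (by norm_num) (by norm_num) (by norm_num) (8 * K)).subset
    fun p hp => by simpa using hp.2.2

lemma finite_C (K : ℤ) : (C K).Finite :=
  (finite_of_form 1 3 7 (by norm_num) (by norm_num) (by norm_num) K).subset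
    fun p hp => by simpa using hp.2.2.2

lemma plus_neg {x y z : ℤ} (hx : Odd x) (hz : Odd z) : Plus (x, y, -z) ↔ ¬ Plus (x, y, z) := by
  obtain ⟨a, rfl⟩ := hx
  obtain ⟨b, rfl⟩ := hz
  simp only [Plus]
  omega

lemma ncard_R (K : ℤ) : (R K).ncard = 2 * {p ∈ R K | Plus p}.ncard := by
  refine ncard_eq_two_mul (finite_R K) _ (fun p => (p.1, p.2.1, -p.2.2)) (by simp) ?_
  rintro ⟨x, y, z⟩ ⟨hx, hy, hz, h⟩
  exact ⟨⟨hx, hy, hz.neg, by simpa using h⟩, plus_neg hx hz⟩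

lemma ncard_S (K : ℤ) : (S K).ncard = 2 * {p ∈ S K | Plus p}.ncard := by
  refine ncard_eq_two_mul (finite_S K) _ (fun p => (p.1, p.2.1, -p.2.2)) (by simp) ?_
  rintro ⟨x, y, z⟩ ⟨hx, hz, h⟩
  exact ⟨⟨hx, hz.neg, by simpa using h⟩, plus_neg hx hz⟩

lemma ncard_C (K : ℤ) : (C K).ncard = 2 * {p ∈ C K | Plus p}.ncard := by
  refine ncard_eq_two_mul (finite_C K) _ (fun p => (p.1, p.2.1, -p.2.2)) (by simp) ?_
  rintro ⟨x, y, z⟩ ⟨hx, hy, hz, h⟩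
  exact ⟨⟨hx, hy, hz.neg, by simpa using h⟩, plus_neg hx hz⟩

lemma ncard_C' (K : ℤ) : (C K).ncard = 2 * {p ∈ C K | (4 : ℤ) ∣ p.1 + p.2.1}.ncard := by
  refine ncard_eq_two_mul (finite_C K) _ (fun p => (p.1, -p.2.1, p.2.2)) (by simp) ?_
  rintro ⟨x, y, z⟩ ⟨hx, hy, hz, h⟩
  refine ⟨⟨hx, hy.neg, hz, by simpa using h⟩, ?_⟩
  obtain ⟨a, rfl⟩ := hx
  obtain ⟨b, rfl⟩ := hy
  simp only
  omega

/-! ### The bijections -/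

lemma odd_sq {a : ℤ} (ha : Odd a) : ∃ c, a ^ 2 = 8 * c + 1 := by
  obtain ⟨b, rfl⟩ := ha
  obtain ⟨c, hc⟩ := Int.even_mul_succ_self b
  exact ⟨c, by linear_combination 4 * hc⟩

lemma eight_dvd_of_odd {Z j : ℤ} (hZ : Odd Z) (h : (8 : ℤ) ∣ Z ^ 2 + j * Z + 2 * j ^ 2) :
    (8 : ℤ) ∣ Z + 3 * j := by
  -- `Z² + jZ + 2j² ≡ (Z + 3j)(Z - 2j) (mod 8)`, and `Z - 2j` is its own inverse modulo `8`
  obtain ⟨c, hc⟩ := odd_sq (a := Z - 2 * j) (hZ.sub_even (even_two_mul j))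
  obtain ⟨d, hd⟩ := h
  exact ⟨(d - j ^ 2) * (Z - 2 * j) - c * (Z + 3 * j),
    by linear_combination (Z - 2 * j) * hd - (Z + 3 * j) * hc⟩

/-- Multiplication by `π² = (-3 + √-7)/2`. -/
lemma ncard_R_plus (m : ℤ) :
    {p ∈ R (8 * m + 3) | Plus p}.ncard
      = {p ∈ {p ∈ S (8 * m + 3) | Plus p} | ¬ Even p.2.1}.ncard := by
  refine ncard_eq_of_inverse
    (fun p => (-(3 * p.1 + 7 * p.2.2) / 2, p.2.1, (p.1 - 3 * p.2.2) / 2))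
    (fun p => ((-3 * p.1 + 7 * p.2.2) / 8, p.2.1, (-p.1 - 3 * p.2.2) / 8)) ?_ ?_
  · rintro ⟨x, y, z⟩ ⟨⟨hx, hy, ⟨t, rfl⟩, h⟩, ⟨j, hj⟩⟩
    simp only at *
    obtain rfl : x = 2 * t + 1 + 4 * j := by linarith
    have e1 : -(3 * (2 * t + 1 + 4 * j) + 7 * (2 * t + 1)) / 2 = -(10 * t + 5 + 6 * j) := by omega
    have e2 : (2 * t + 1 + 4 * j - 3 * (2 * t + 1)) / 2 = 2 * j - 2 * t - 1 := by omega
    rw [e1, e2]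
    refine ⟨⟨⟨⟨⟨-5 * t - 3 * j - 3, by simp only; ring⟩, ⟨j - t - 1, by simp only; ring⟩, ?_⟩, ?_⟩,
      by simpa using hy⟩, ?_⟩
    · simp only
      linear_combination 4 * h
    · simp only [Plus]
      omega
    · refine Prod.ext ?_ (Prod.ext rfl ?_) <;> simp only <;> omega
  · rintro ⟨X, w, Z⟩ ⟨⟨⟨hX, hZ, h⟩, ⟨j, hj⟩⟩, hw⟩
    simp only at *
    obtain rfl : X = Z + 4 * j := by linarith
    rw [Int.not_even_iff_odd] at hw
    obtain ⟨c, hc⟩ := odd_sq hw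
    have h8 : (8 : ℤ) ∣ Z + 3 * j :=
      eight_dvd_of_odd hZ ⟨m - 3 * c, by linarith⟩
    obtain ⟨i, hi⟩ := h8
    obtain ⟨t, ht⟩ := hZ
    obtain rfl : Z = 8 * i - 3 * j := by linarith
    have e1 : (-3 * (8 * i - 3 * j + 4 * j) + 7 * (8 * i - 3 * j)) / 8 = 4 * i - 3 * j := by omega
    have e2 : (-(8 * i - 3 * j + 4 * j) - 3 * (8 * i - 3 * j)) / 8 = j - 4 * i := by omega
    have hjo : Odd j := by rw [Int.odd_iff]; omega
    rw [e1, e2]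
    refine ⟨⟨⟨?_, hw, ?_, ?_⟩, ?_⟩, ?_⟩
    · simp only [Int.odd_iff]; omega
    · simp only [Int.odd_iff]; omega
    · simp only
      linarith
    · simp only [Plus]
      omega
    · refine Prod.ext ?_ (Prod.ext rfl ?_) <;> simp only <;> omega

/-- Multiplication by `π = (1 + √-7)/2`, on `ℤ[√-7]`. -/
lemma ncard_A_eq (m : ℤ) :
    (A (8 * m + 3)).ncard
      = {p ∈ {p ∈ S (8 * m + 3) | Plus p} | Even p.2.1}.ncard := by
  refine ncard_eq_of_inverse
    (fun p => (p.1 - 7 * p.2.2, 2 * p.2.1, p.1 + p.2.2))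
    (fun p => ((p.1 + 7 * p.2.2) / 8, p.2.1 / 2, (p.2.2 - p.1) / 8)) ?_ ?_
  · rintro ⟨p, v, q⟩ h
    simp only [A, Set.mem_ofPred_eq] at h
    have hpq : Odd (p + q) := by
      have h1 : Odd (p ^ 2 + 12 * v ^ 2 + 7 * q ^ 2) := ⟨4 * m + 1, by linarith⟩
      simp [parity_simps, Int.not_even_iff_odd.symm, show ¬ Even (7 : ℤ) by decide,
        show Even (12 : ℤ) by decide] at h1 ⊢
      exact h1
    rw [Int.odd_iff] at hpq
    refine ⟨⟨⟨⟨?_, ?_, ?_⟩, ?_⟩, ?_⟩, ?_⟩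
    · simp only [Int.odd_iff]; omega
    · simp only [Int.odd_iff]; omega
    · simp only
      linear_combination 8 * h
    · simp only [Plus]
      omega
    · exact even_two_mul v
    · refine Prod.ext ?_ (Prod.ext ?_ ?_) <;> simp only <;> omega
  · rintro ⟨X, w, Z⟩ ⟨⟨⟨hX, hZ, h⟩, ⟨j, hj⟩⟩, ⟨v, hv⟩⟩
    simp only at *
    obtain rfl : X = Z + 4 * j := by linarith
    subst hv
    have hje : Even j := by
      have h1 : Odd (Z ^ 2 + j * Z + 2 * (j ^ 2 + 6 * v ^ 2)) := ⟨4 * m + 1, by linarith⟩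
      simp only [Int.not_even_iff_odd.symm] at h1 hZ
      simp [parity_simps, hZ] at h1
      exact h1
    obtain ⟨i, rfl⟩ := hje
    have e1 : (Z + 4 * (i + i) + 7 * Z) / 8 = Z + i := by omega
    have e2 : (Z - (Z + 4 * (i + i))) / 8 = -i := by omega
    have e3 : (v + v) / 2 = v := by omega
    rw [e1, e2, e3]
    refine ⟨?_, ?_⟩
    · simp only [A, Set.mem_ofPred_eq]
      linarith
    · refine Prod.ext ?_ (Prod.ext ?_ ?_) <;> simp only <;> omega

/-- Multiplication by `π = (1 + √-7)/2`, on elements `(x + z√-7)/2` with `x, z` odd. -/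
lemma ncard_C_plus (m : ℤ) :
    {p ∈ C (8 * m + 3) | Plus p}.ncard = {p ∈ R (8 * m + 3) | Plus p}.ncard := by
  refine ncard_eq_of_inverse
    (fun p => ((p.1 - 7 * p.2.2) / 2, p.2.1, (p.1 + p.2.2) / 2))
    (fun p => ((p.1 + 7 * p.2.2) / 4, p.2.1, (p.2.2 - p.1) / 4)) ?_ ?_
  · rintro ⟨X, w, Z⟩ ⟨⟨hX, hw, ⟨t, rfl⟩, h⟩, ⟨j, hj⟩⟩
    simp only at *
    obtain rfl : X = 2 * t + 1 + 4 * j := by linarith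
    have e1 : (2 * t + 1 + 4 * j - 7 * (2 * t + 1)) / 2 = 2 * j - 6 * t - 3 := by omega
    have e2 : (2 * t + 1 + 4 * j + (2 * t + 1)) / 2 = 2 * t + 1 + 2 * j := by omega
    rw [e1, e2]
    refine ⟨⟨⟨?_, hw, ?_, ?_⟩, ?_⟩, ?_⟩
    · simp only [Int.odd_iff]; omega
    · simp only [Int.odd_iff]; omega
    · simp only
      linear_combination 2 * h
    · simp only [Plus]
      omega
    · refine Prod.ext ?_ (Prod.ext rfl ?_) <;> simp only <;> omega
  · rintro ⟨x, y, z⟩ ⟨⟨hx, hy, hz, h⟩, ⟨j, hj⟩⟩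
    simp only at *
    obtain rfl : x = z + 4 * j := by linarith
    obtain ⟨c, hc⟩ := odd_sq hy
    obtain ⟨d, hd⟩ := odd_sq hz
    have hjo : Odd j := by
      have h1 : Even (z ^ 2 + j * z + 2 * j ^ 2) := ⟨m - 3 * c, by linarith⟩
      simp only [Int.not_even_iff_odd.symm] at hz ⊢
      simp [parity_simps, hz] at h1
      simpa using h1
    rw [Int.odd_iff] at hjo hz
    have e1 : (z + 4 * j + 7 * z) / 4 = 2 * z + j := by omega
    have e2 : (z - (z + 4 * j)) / 4 = -j := by omega
    rw [e1, e2]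
    refine ⟨⟨⟨?_, hy, ?_, ?_⟩, ?_⟩, ?_⟩
    · simp only [Int.odd_iff]; omega
    · simp only [Int.odd_iff]; omega
    · simp only
      linarith
    · simp only [Plus]
      omega
    · refine Prod.ext ?_ (Prod.ext rfl ?_) <;> simp only <;> omega

/-- Multiplication of `p/2 + v√-3` by the cube root of unity `(-1 + √-3)/2`. -/
lemma ncard_A_eq' (m : ℤ) :
    (A (8 * m + 3)).ncard = {p ∈ C (8 * m + 3) | (4 : ℤ) ∣ p.1 + p.2.1}.ncard := by
  refine ncard_eq_of_inverse
    (fun p => (-(p.1 / 2) - 3 * p.2.1, p.1 / 2 - p.2.1, p.2.2))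
    (fun p => ((3 * p.2.1 - p.1) / 2, -(p.1 + p.2.1) / 4, p.2.2)) ?_ ?_
  · rintro ⟨p, v, q⟩ h
    simp only [A, Set.mem_ofPred_eq] at h
    have hp : Even p := by
      by_contra hp
      rw [Int.not_even_iff_odd] at hp
      have hq : Even q := by
        by_contra hq
        rw [Int.not_even_iff_odd] at hq
        obtain ⟨c, hc⟩ := odd_sq hp
        obtain ⟨d, hd⟩ := odd_sq hq
        omega
      obtain ⟨c, hc⟩ := odd_sq hp
      obtain ⟨t, rfl⟩ := hq
      ring_nf at h
      omega
    have hq : Odd q := by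
      have h1 : Odd (p ^ 2 + 12 * v ^ 2 + 7 * q ^ 2) := ⟨4 * m + 1, by linarith⟩
      simp only [Int.not_even_iff_odd.symm] at h1 ⊢
      simpa [parity_simps, hp, show ¬ Even (7 : ℤ) by decide,
        show Even (12 : ℤ) by decide] using h1
    obtain ⟨r, rfl⟩ := hp
    obtain ⟨d, hd⟩ := odd_sq hq
    have hrv : Odd (r + v) := by
      have h1 : Odd (r ^ 2 + 3 * v ^ 2) := ⟨m - 1 - 7 * d, by linarith⟩
      simp only [Int.not_even_iff_odd.symm] at h1 ⊢
      simpa [parity_simps, show ¬ Even (3 : ℤ) by decide] using h1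
    rw [Int.odd_iff] at hrv
    have e : (r + r) / 2 = r := by omega
    simp only [e]
    refine ⟨⟨⟨?_, ?_, hq, ?_⟩, ?_⟩, ?_⟩
    · simp only [Int.odd_iff]; omega
    · simp only [Int.odd_iff]; omega
    · simp only
      linarith
    · simp only
      omega
    · refine Prod.ext ?_ (Prod.ext ?_ rfl) <;> simp only <;> omega
  · rintro ⟨X, W, q⟩ ⟨⟨hX, hW, hq, h⟩, ⟨j, hj⟩⟩
    simp only at *
    obtain rfl : X = 4 * j - W := by linarith
    have e1 : (3 * W - (4 * j - W)) / 2 = 2 * W - 2 * j := by omega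
    have e2 : -(4 * j - W + W) / 4 = -j := by omega
    rw [e1, e2]
    refine ⟨?_, ?_⟩
    · simp only [A, Set.mem_ofPred_eq]
      linarith
    · refine Prod.ext ?_ (Prod.ext ?_ rfl) <;> simp only <;> omega

lemma ncard_S_eq (m : ℤ) : (S (8 * m + 3)).ncard = 2 * (R (8 * m + 3)).ncard := by
  have h1 := ncard_S (8 * m + 3)
  have h2 := ncard_split ((finite_S (8 * m + 3)).subset (Set.sep_subset _ Plus))
    (fun p => Even p.2.1)
  have h3 := ncard_A_eq m
  have h4 := ncard_R_plus m
  have h5 := ncard_C (8 * m + 3)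
  have h6 := ncard_C' (8 * m + 3)
  have h7 := ncard_C_plus m
  have h8 := ncard_A_eq' m
  have h9 := ncard_R (8 * m + 3)
  omega

/-! ### The counting functions `N` and `T` -/

lemma N_eq (k : ℕ) :
    N 1 6 7 k = {p : ℤ × ℤ × ℤ | 1 * p.1 ^ 2 + 6 * p.2.1 ^ 2 + 7 * p.2.2 ^ 2 = (k : ℤ)}.ncard := by
  rw [← Nat.card_coe_set_eq]
  simp only [N, Nat.cast_one, Nat.cast_ofNat]
  rfl

lemma N_four_mul (k : ℕ) (K : ℤ) (hk : (k : ℤ) = 2 * K) :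
    N 1 6 7 (4 * k) = N 1 6 7 k + (S K).ncard := by
  rw [N_eq, N_eq, ncard_split (finite_of_form 1 6 7 (by norm_num) (by norm_num) (by norm_num) _)
    (fun p => Even p.2.2)]
  push_cast
  rw [hk]
  congr 1
  · refine ncard_eq_of_inverse (fun p => (p.1 / 2, p.2.1 / 2, p.2.2 / 2))
      (fun p => (2 * p.1, 2 * p.2.1, 2 * p.2.2)) ?_ ?_
    · rintro ⟨x, y, z⟩ ⟨h, hz⟩
      simp only [Set.mem_ofPred_eq] at h hz
      have hx : Even x := by
        have h1 : Even (x ^ 2 + 6 * y ^ 2 + 7 * z ^ 2) := ⟨4 * K, by linarith⟩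
        simpa [parity_simps, hz, show Even (6 : ℤ) by decide] using h1
      obtain ⟨c, rfl⟩ := hz
      obtain ⟨a, rfl⟩ := hx
      have hy : Even y := by
        have h1 : Even (3 * y ^ 2) := ⟨2 * K - a ^ 2 - 7 * c ^ 2, by linarith⟩
        simpa [parity_simps, show ¬ Even (3 : ℤ) by decide] using h1
      obtain ⟨b, rfl⟩ := hy
      have e : ∀ t : ℤ, (t + t) / 2 = t := by intro t; omega
      simp only [e, Set.mem_ofPred_eq]
      refine ⟨by linarith, ?_⟩
      refine Prod.ext ?_ (Prod.ext ?_ ?_) <;> simp only <;> omega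
    · rintro ⟨x, y, z⟩ h
      simp only [Set.mem_ofPred_eq] at h
      refine ⟨⟨?_, even_two_mul z⟩, ?_⟩
      · simp only [Set.mem_ofPred_eq]
        linarith
      · refine Prod.ext ?_ (Prod.ext ?_ ?_) <;> simp only <;> omega
  · refine ncard_eq_of_inverse (fun p => (p.1, p.2.1 / 2, p.2.2))
      (fun p => (p.1, 2 * p.2.1, p.2.2)) ?_ ?_
    · rintro ⟨x, y, z⟩ ⟨h, hz⟩
      simp only [Set.mem_ofPred_eq] at h hz
      have hx : Odd x := by
        have h1 : Even (x ^ 2 + 6 * y ^ 2 + 7 * z ^ 2) := ⟨4 * K, by linarith⟩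
        rw [← Int.not_even_iff_odd]
        simpa [parity_simps, hz, show Even (6 : ℤ) by decide,
          show ¬ Even (7 : ℤ) by decide] using h1
      rw [Int.not_even_iff_odd] at hz
      have hy : Even y := by
        obtain ⟨c, hc⟩ := odd_sq hx
        obtain ⟨d, hd⟩ := odd_sq hz
        have h1 : Even (3 * y ^ 2) := ⟨2 * K - 2 * c - 14 * d - 2, by linarith⟩
        simpa [parity_simps, show ¬ Even (3 : ℤ) by decide] using h1
      obtain ⟨b, rfl⟩ := hy
      have e : (b + b) / 2 = b := by omega
      simp only [e]
      refine ⟨⟨hx, hz, ?_⟩, ?_⟩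
      · simp only
        linarith
      · refine Prod.ext rfl (Prod.ext ?_ rfl)
        simp only
        omega
    · rintro ⟨x, y, z⟩ ⟨hx, hz, h⟩
      simp only at hx hz h
      refine ⟨⟨?_, by simpa using hz⟩, ?_⟩
      · simp only [Set.mem_ofPred_eq]
        linarith
      · refine Prod.ext rfl (Prod.ext ?_ rfl)
        simp only
        omega

lemma ncard_R_eq (n : ℕ) (K : ℤ) (hK : 2 * K = 8 * n + 14) :
    (R K).ncard = 8 * T 1 6 7 n := by
  have neg_pos_iff : ∀ {x : ℤ}, Odd x → (0 < -x ↔ ¬ 0 < x) := by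
    rintro x ⟨a, rfl⟩
    omega
  -- each of the three sign changes halves the set
  have h1 := ncard_eq_two_mul (finite_R K) (fun p => 0 < p.1) (fun p => (-p.1, p.2.1, p.2.2))
    (by simp) (by
      rintro ⟨x, y, z⟩ ⟨hx, hy, hz, h⟩
      exact ⟨⟨hx.neg, hy, hz, by simpa using h⟩, neg_pos_iff hx⟩)
  have f1 := (finite_R K).subset (Set.sep_subset _ (fun p : ℤ × ℤ × ℤ => 0 < p.1))
  have h2 := ncard_eq_two_mul f1 (fun p => 0 < p.2.1) (fun p => (p.1, -p.2.1, p.2.2))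
    (by simp) (by
      rintro ⟨x, y, z⟩ ⟨⟨hx, hy, hz, h⟩, px⟩
      exact ⟨⟨⟨hx, hy.neg, hz, by simpa using h⟩, px⟩, neg_pos_iff hy⟩)
  have f2 := f1.subset (Set.sep_subset _ (fun p : ℤ × ℤ × ℤ => 0 < p.2.1))
  have h3 := ncard_eq_two_mul f2 (fun p => 0 < p.2.2) (fun p => (p.1, p.2.1, -p.2.2))
    (by simp) (by
      rintro ⟨x, y, z⟩ ⟨⟨⟨hx, hy, hz, h⟩, px⟩, py⟩
      exact ⟨⟨⟨⟨hx, hy, hz.neg, by simpa using h⟩, px⟩, py⟩, neg_pos_iff hz⟩)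
  have tri : ∀ x : ℕ, ((2 * x + 1 : ℕ) : ℤ) ^ 2 = 8 * ((x * (x + 1) / 2 : ℕ) : ℤ) + 1 := by
    intro x
    have := Nat.div_mul_cancel (Nat.even_mul_succ_self x).two_dvd
    zify at this
    push_cast
    linarith
  have h4 : T 1 6 7 n
      = {p ∈ {p ∈ {p ∈ R K | 0 < p.1} | 0 < p.2.1} | 0 < p.2.2}.ncard := by
    have h5 : T 1 6 7 n = {p : ℕ × ℕ × ℕ | 1 * (p.1 * (p.1 + 1) / 2)
        + 6 * (p.2.1 * (p.2.1 + 1) / 2) + 7 * (p.2.2 * (p.2.2 + 1) / 2) = n}.ncard := by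
      rw [← Nat.card_coe_set_eq]
      rfl
    rw [h5]
    refine ncard_eq_of_inverse
      (fun p => (((2 * p.1 + 1 : ℕ) : ℤ), ((2 * p.2.1 + 1 : ℕ) : ℤ), ((2 * p.2.2 + 1 : ℕ) : ℤ)))
      (fun p => (p.1.toNat / 2, p.2.1.toNat / 2, p.2.2.toNat / 2)) ?_ ?_
    · rintro ⟨x, y, z⟩ h
      simp only [Set.mem_ofPred_eq] at h
      have o : ∀ x : ℕ, Odd ((2 * x + 1 : ℕ) : ℤ) := fun x => ⟨x, by push_cast; ring⟩
      refine ⟨⟨⟨⟨⟨o x, o y, o z, ?_⟩, ?_⟩, ?_⟩, ?_⟩, ?_⟩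
      · simp only
        rw [tri, tri, tri]
        omega
      · simp only; omega
      · simp only; omega
      · simp only; omega
      · refine Prod.ext ?_ (Prod.ext ?_ ?_) <;> simp only <;> omega
    · rintro ⟨x, y, z⟩ ⟨⟨⟨⟨⟨a, ha⟩, ⟨b, hb⟩, ⟨c, hc⟩, h⟩, px⟩, py⟩, pz⟩
      simp only at *
      lift a to ℕ using by omega
      lift b to ℕ using by omega
      lift c to ℕ using by omega
      have ea : x = ((2 * a + 1 : ℕ) : ℤ) := by push_cast; exact ha
      have eb : y = ((2 * b + 1 : ℕ) : ℤ) := by push_cast; exact hb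
      have ec : z = ((2 * c + 1 : ℕ) : ℤ) := by push_cast; exact hc
      have e : ∀ t : ℕ, (((2 * t + 1 : ℕ) : ℤ)).toNat / 2 = t := by intro t; omega
      clear ha hb hc
      subst ea eb ec
      rw [e, e, e]
      refine ⟨?_, rfl⟩
      rw [tri, tri, tri] at h
      simp only [Set.mem_ofPred_eq]
      omega
  omega

end Stmt10

theorem stmt_10 (n : ℕ) (hn : 0 < n) (hpar : Odd n) :
    (16 * T 1 6 7 n : ℤ) = (N 1 6 7 (4 * (8 * n + 14)) : ℤ) - (N 1 6 7 (8 * n + 14) : ℤ) := by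
  obtain ⟨m, rfl⟩ := hpar
  have h1 := Stmt10.N_four_mul (8 * (2 * m + 1) + 14) (8 * ((m : ℤ) + 1) + 3) (by push_cast; ring)
  have h2 := Stmt10.ncard_R_eq (2 * m + 1) (8 * ((m : ℤ) + 1) + 3) (by push_cast; ring)
  have h3 := Stmt10.ncard_S_eq ((m : ℤ) + 1)
  omega
end

section
/- For every odd positive integer n, 16·T(2,3,21;n) = N(2,3,21;4(8n+26)) − N(2,3,21;8n+26). -/
namespace TernarySum

/-! ### Counting by involutions and bijections -/

/-- An involution of `{p | P p}` that exchanges `Q` and its negation makes `Q` hold on exactly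
half of that set. No finiteness is needed: if the set is infinite, both sides are `0`. -/
lemma card_eq_two_mul {X : Type*} (P Q : X → Prop) (σ : X → X) (hσ : ∀ p, σ (σ p) = p)
    (hP : ∀ p, P p → P (σ p)) (hQ : ∀ p, P p → (Q (σ p) ↔ ¬ Q p)) :
    Nat.card {p // P p} = 2 * Nat.card {p // P p ∧ Q p} := by
  classical
  let e : {p // P p} ≃ Bool × {p // P p ∧ Q p} :=
    { toFun := fun p => if h : Q p.1 then (true, ⟨p.1, p.2, h⟩)
        else (false, ⟨σ p.1, hP _ p.2, (hQ _ p.2).2 h⟩)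
      invFun := fun q => if q.1 = true then ⟨q.2.1, q.2.2.1⟩ else ⟨σ q.2.1, hP _ q.2.2.1⟩
      left_inv := by
        rintro ⟨p, hp⟩
        by_cases h : Q p <;> simp [h, hσ]
      right_inv := by
        rintro ⟨b, p, hp, hq⟩
        have := hQ p hp
        cases b <;> simp [hq, hσ, this] }
  rw [Nat.card_congr e, Nat.card_prod]
  simp

lemma card_eq_of_maps {X Y : Type*} {P : X → Prop} {Q : Y → Prop} (f : X → Y) (g : Y → X)
    (hf : ∀ p, P p → Q (f p) ∧ g (f p) = p) (hg : ∀ q, Q q → P (g q) ∧ f (g q) = q) :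
    Nat.card {p // P p} = Nat.card {q // Q q} :=
  Nat.card_congr
    { toFun := fun p => ⟨f p.1, (hf _ p.2).1⟩
      invFun := fun q => ⟨g q.1, (hg _ q.2).1⟩
      left_inv := fun p => Subtype.ext (hf _ p.2).2
      right_inv := fun q => Subtype.ext (hg _ q.2).2 }

lemma card_split {X : Type*} (P Q : X → Prop) (hfin : Finite {p // P p}) :
    Nat.card {p // P p} = Nat.card {p // P p ∧ Q p} + Nat.card {p // P p ∧ ¬ Q p} := by
  classical
  have h1 : Finite {p // P p ∧ Q p} :=
    Finite.of_injective (fun p => (⟨p.1, p.2.1⟩ : {p // P p}))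
      (fun a b h => Subtype.ext (by simpa using h))
  have h2 : Finite {p // P p ∧ ¬ Q p} :=
    Finite.of_injective (fun p => (⟨p.1, p.2.1⟩ : {p // P p}))
      (fun a b h => Subtype.ext (by simpa using h))
  rw [← Nat.card_sum]
  exact Nat.card_congr
    { toFun := fun p => if h : Q p.1 then Sum.inl ⟨p.1, p.2, h⟩ else Sum.inr ⟨p.1, p.2, h⟩
      invFun := fun q => q.elim (fun a => ⟨a.1, a.2.1⟩) (fun a => ⟨a.1, a.2.1⟩)
      left_inv := by
        rintro ⟨p, hp⟩
        by_cases h : Q p <;> simp [h]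
      right_inv := by
        rintro (⟨p, hp, hq⟩ | ⟨p, hp, hq⟩) <;> simp [hq] }

lemma finite_reps (m : ℤ) :
    Finite {p : ℤ × ℤ × ℤ // 2 * p.1 ^ 2 + 3 * p.2.1 ^ 2 + 21 * p.2.2 ^ 2 = m} := by
  have : Set.Finite {p : ℤ × ℤ × ℤ | 2 * p.1 ^ 2 + 3 * p.2.1 ^ 2 + 21 * p.2.2 ^ 2 = m} := by
    apply ((Set.finite_Icc (-m) m).prod ((Set.finite_Icc (-m) m).prod
      (Set.finite_Icc (-m) m))).subset
    rintro ⟨x, y, z⟩ h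
    simp only [Set.mem_ofPred_eq] at h
    simp only [Set.mem_prod, Set.mem_Icc]
    refine ⟨⟨?_, ?_⟩, ⟨?_, ?_⟩, ⟨?_, ?_⟩⟩ <;>
      nlinarith [sq_nonneg x, sq_nonneg y, sq_nonneg z, Int.le_self_sq x, Int.le_self_sq y,
        Int.le_self_sq z, Int.le_self_sq (-x), Int.le_self_sq (-y), Int.le_self_sq (-z)]
  exact this.to_subtype

/-! ### Squares modulo powers of two -/

lemma sq_odd {y : ℤ} (h : y % 2 = 1) : y ^ 2 % 8 = 1 := by
  rcases Int.even_or_odd y with h' | h'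
  · rw [Int.even_iff] at h'; omega
  · obtain ⟨t, rfl⟩ := h'
    obtain ⟨s, hs⟩ := Int.even_mul_succ_self t
    have : (2 * t + 1) ^ 2 = 8 * s + 1 := by linear_combination 4 * hs
    omega

lemma sq_even {y : ℤ} (h : y % 2 = 0) : y ^ 2 % 4 = 0 := by
  obtain ⟨t, rfl⟩ : ∃ t, y = 2 * t := ⟨y / 2, by omega⟩
  ring_nf; omega

lemma sq_cases (y : ℤ) : (y % 2 = 1 ∧ y ^ 2 % 8 = 1) ∨ (y % 2 = 0 ∧ y ^ 2 % 4 = 0) := by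
  rcases Int.emod_two_eq_zero_or_one y with h | h
  · exact Or.inr ⟨h, sq_even h⟩
  · exact Or.inl ⟨h, sq_odd h⟩

lemma sq_mod_sixteen {y : ℤ} (h : y % 2 = 1) :
    ((y % 8 = 1 ∨ y % 8 = 7) ∧ y ^ 2 % 16 = 1) ∨ ((y % 8 = 3 ∨ y % 8 = 5) ∧ y ^ 2 % 16 = 9) := by
  obtain ⟨q, r, hq, hr⟩ : ∃ q r, y = 8 * q + r ∧ (r = 1 ∨ r = 3 ∨ r = 5 ∨ r = 7) :=
    ⟨y / 8, y % 8, by omega, by omega⟩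
  rcases hr with rfl | rfl | rfl | rfl <;> subst hq <;> ring_nf <;> omega

/-! ### The solution sets -/

/-- Solutions of `2 x² + 3 y² + 21 z² = 16 k + 34` in odd integers. -/
def D (k : ℤ) (p : ℤ × ℤ × ℤ) : Prop :=
  (p.1 % 2 = 1 ∧ p.2.1 % 2 = 1 ∧ p.2.2 % 2 = 1) ∧
    2 * p.1 ^ 2 + 3 * p.2.1 ^ 2 + 21 * p.2.2 ^ 2 = 16 * k + 34

/-- The half of `D` on which `y + z √-7` is divisible by `2 π` (rather than by `2 π̄`). -/
def DHalf (k : ℤ) (p : ℤ × ℤ × ℤ) : Prop := D k p ∧ (p.2.1 + 3 * p.2.2) % 8 = 0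

/-- Solutions of `2 x² + 3 y² + 21 z² = 4 (16 k + 34)` with `y` odd. -/
def C (k : ℤ) (p : ℤ × ℤ × ℤ) : Prop :=
  2 * p.1 ^ 2 + 3 * p.2.1 ^ 2 + 21 * p.2.2 ^ 2 = 4 * (16 * k + 34) ∧ ¬ p.2.1 % 2 = 0

/-- Solutions of `4 v² + 12 a² + 21 b² = 8 k + 17`. -/
def E (k : ℤ) (p : ℤ × ℤ × ℤ) : Prop :=
  4 * p.1 ^ 2 + 12 * p.2.1 ^ 2 + 21 * p.2.2 ^ 2 = 8 * k + 17

lemma D_cong {k : ℤ} {p : ℤ × ℤ × ℤ} (h : D k p) : (p.2.1 ^ 2 + 7 * p.2.2 ^ 2) % 16 = 0 := by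
  obtain ⟨⟨hx, hy, hz⟩, he⟩ := h
  have := sq_odd hx
  omega

lemma C_parity {k : ℤ} {p : ℤ × ℤ × ℤ} (h : C k p) :
    p.1 % 2 = 0 ∧ p.2.1 % 2 = 1 ∧ p.2.2 % 2 = 1 := by
  obtain ⟨he, hy⟩ := h
  have := sq_cases p.1
  have := sq_cases p.2.1
  have := sq_cases p.2.2
  omega

lemma E_parity {k : ℤ} {p : ℤ × ℤ × ℤ} (h : E k p) :
    (p.1 + p.2.1) % 2 = 1 ∧ p.2.2 % 2 = 1 := by
  unfold E at h
  have := sq_cases p.1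
  have := sq_cases p.2.1
  have := sq_cases p.2.2
  omega

/-! ### Halving by sign changes -/

lemma card_D (k : ℤ) : Nat.card {p // D k p} = 2 * Nat.card {p // DHalf k p} := by
  refine card_eq_two_mul (D k) (fun p => (p.2.1 + 3 * p.2.2) % 8 = 0)
    (fun p => (p.1, p.2.1, -p.2.2)) (by simp) ?_ ?_
  · rintro ⟨x, y, z⟩ ⟨⟨hx, hy, hz⟩, he⟩
    refine ⟨⟨hx, hy, ?_⟩, ?_⟩
    · dsimp only at *; omega
    · simpa using he
  · rintro ⟨x, y, z⟩ h
    have hc := D_cong h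
    obtain ⟨⟨hx, hy, hz⟩, he⟩ := h
    have := sq_mod_sixteen hy
    have := sq_mod_sixteen hz
    dsimp only at *
    omega

/-- The quarter of `D` in the image of the isometry is half of `DHalf`. -/
lemma card_DHalf (k : ℤ) : Nat.card {p // DHalf k p} =
    2 * Nat.card {p : ℤ × ℤ × ℤ // DHalf k p ∧ (p.1 + 2 * p.2.2 + (p.2.1 - p.2.2) / 4) % 4 = 0} := by
  refine card_eq_two_mul (DHalf k) (fun p => (p.1 + 2 * p.2.2 + (p.2.1 - p.2.2) / 4) % 4 = 0)
    (fun p => (-p.1, p.2.1, p.2.2)) (by simp) ?_ ?_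
  · rintro ⟨x, y, z⟩ ⟨⟨⟨hx, hy, hz⟩, he⟩, hq⟩
    refine ⟨⟨⟨?_, hy, hz⟩, ?_⟩, hq⟩
    · dsimp only at *; omega
    · simpa using he
  · rintro ⟨x, y, z⟩ ⟨⟨⟨hx, hy, hz⟩, he⟩, hq⟩
    dsimp only at *
    omega

lemma card_E (k : ℤ) : Nat.card {p // E k p} =
    2 * Nat.card {p : ℤ × ℤ × ℤ // E k p ∧ (p.1 + p.2.1 + p.2.2) % 4 = 2} := by
  refine card_eq_two_mul (E k) (fun p => (p.1 + p.2.1 + p.2.2) % 4 = 2)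
    (fun p => (p.1, p.2.1, -p.2.2)) (by simp) ?_ ?_
  · rintro ⟨x, y, z⟩ h
    simpa [E] using h
  · rintro ⟨x, y, z⟩ h
    have := E_parity h
    dsimp only at *
    omega

lemma card_C_two (k : ℤ) : Nat.card {p : ℤ × ℤ × ℤ // C k p ∧ ¬ p.1 % 4 = 0} =
    2 * Nat.card {p : ℤ × ℤ × ℤ // (C k p ∧ ¬ p.1 % 4 = 0) ∧ (p.2.1 + 3 * p.2.2) % 8 = 0} := by
  refine card_eq_two_mul (fun p : ℤ × ℤ × ℤ => C k p ∧ ¬ p.1 % 4 = 0)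
    (fun p => (p.2.1 + 3 * p.2.2) % 8 = 0) (fun p => (p.1, p.2.1, -p.2.2)) (by simp) ?_ ?_
  · rintro ⟨x, y, z⟩ h
    simpa [C] using h
  · rintro ⟨x, y, z⟩ ⟨h, h4⟩
    obtain ⟨hx, hy, hz⟩ := C_parity h
    obtain ⟨he, -⟩ := h
    dsimp only at *
    obtain ⟨w, rfl⟩ : ∃ w, x = 2 * w := ⟨x / 2, by omega⟩
    have := sq_odd (y := w) (by omega)
    rw [mul_pow] at he
    have := sq_mod_sixteen hy
    have := sq_mod_sixteen hz
    omega

lemma card_C_zero (k : ℤ) : Nat.card {p : ℤ × ℤ × ℤ // C k p ∧ p.1 % 4 = 0} =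
    2 * Nat.card {p : ℤ × ℤ × ℤ // (C k p ∧ p.1 % 4 = 0) ∧ (p.2.1 - p.2.2) % 8 = 0} := by
  refine card_eq_two_mul (fun p : ℤ × ℤ × ℤ => C k p ∧ p.1 % 4 = 0)
    (fun p => (p.2.1 - p.2.2) % 8 = 0) (fun p => (p.1, p.2.1, -p.2.2)) (by simp) ?_ ?_
  · rintro ⟨x, y, z⟩ h
    simpa [C] using h
  · rintro ⟨x, y, z⟩ ⟨h, h4⟩
    obtain ⟨hx, hy, hz⟩ := C_parity h
    obtain ⟨he, -⟩ := h
    dsimp only at *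
    obtain ⟨w, rfl⟩ : ∃ w, x = 4 * w := ⟨x / 4, by omega⟩
    rw [mul_pow] at he
    have := sq_mod_sixteen hy
    have := sq_mod_sixteen hz
    omega

/-! ### The bijections -/

/-- Division of `(Y + Z √-7) / 2` by `π²`, with quotient `(y + z √-7) / 2`. -/
lemma card_C_two_eq (k : ℤ) :
    Nat.card {p : ℤ × ℤ × ℤ // (C k p ∧ ¬ p.1 % 4 = 0) ∧ (p.2.1 + 3 * p.2.2) % 8 = 0} =
      Nat.card {p // DHalf k p} := by
  refine card_eq_of_maps
    (fun p => (p.1 / 2, (-3 * p.2.1 + 7 * p.2.2) / 8, (-p.2.1 - 3 * p.2.2) / 8))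
    (fun p => (2 * p.1, (-3 * p.2.1 - 7 * p.2.2) / 2, (p.2.1 - 3 * p.2.2) / 2)) ?_ ?_
  · rintro ⟨x, y, z⟩ ⟨⟨h, h4⟩, hq⟩
    obtain ⟨hx, hy, hz⟩ := C_parity h
    obtain ⟨he, -⟩ := h
    dsimp only at *
    obtain ⟨w, rfl⟩ : ∃ w, x = 2 * w := ⟨x / 2, by omega⟩
    obtain ⟨i, rfl⟩ : ∃ i, y = 8 * i - 3 * z := ⟨(y + 3 * z) / 8, by omega⟩
    have hw := sq_odd (y := w) (by omega)
    -- The equation divided by `8`; as `w² ≡ 1 mod 8`, it yields `4 ∣ z (z - 3 i)`.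
    have h1 : w ^ 2 + 24 * i ^ 2 + 6 * (z * (z - 3 * i)) = 8 * k + 17 := by nlinarith
    have h2 : (4 : ℤ) ∣ z * (z - 3 * i) := by omega
    have h3 : (4 : ℤ) ∣ z - 3 * i := by
      have hc : IsCoprime (4 : ℤ) z := by
        have : IsCoprime (2 : ℤ) z := ⟨-(z / 2), 1, by omega⟩
        exact this.pow_left (m := 2)
      exact hc.dvd_of_dvd_mul_left h2
    have e1 : (-3 * (8 * i - 3 * z) + 7 * z) / 8 = 2 * z - 3 * i := by omega
    have e2 : (-(8 * i - 3 * z) - 3 * z) / 8 = -i := by omega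
    have e3 : 2 * w / 2 = w := by omega
    rw [e1, e2, e3]
    refine ⟨⟨⟨⟨?_, ?_, ?_⟩, ?_⟩, ?_⟩, ?_⟩ <;> try dsimp only
    · omega
    · omega
    · omega
    · nlinarith
    · omega
    · refine Prod.ext rfl (Prod.ext ?_ ?_) <;> (try dsimp only) <;> omega
  · rintro ⟨x, y, z⟩ ⟨⟨⟨hx, hy, hz⟩, he⟩, hq⟩
    dsimp only at *
    obtain ⟨i, rfl⟩ : ∃ i, y = 8 * i - 3 * z := ⟨(y + 3 * z) / 8, by omega⟩
    have e1 : (-3 * (8 * i - 3 * z) - 7 * z) / 2 = z - 12 * i := by omega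
    have e2 : (8 * i - 3 * z - 3 * z) / 2 = 4 * i - 3 * z := by omega
    rw [e1, e2]
    refine ⟨⟨⟨⟨?_, ?_⟩, ?_⟩, ?_⟩, ?_⟩ <;> try dsimp only
    · nlinarith
    · omega
    · omega
    · omega
    · refine Prod.ext ?_ (Prod.ext ?_ ?_) <;> (try dsimp only) <;> omega

/-- Division of `(Y + Z √-7) / 2` by `π`, with quotient `2 a + b √-7`. -/
lemma card_C_zero_eq (k : ℤ) :
    Nat.card {p : ℤ × ℤ × ℤ // (C k p ∧ p.1 % 4 = 0) ∧ (p.2.1 - p.2.2) % 8 = 0} =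
      Nat.card {p // E k p} := by
  refine card_eq_of_maps
    (fun p => (p.1 / 4, (p.2.1 + 7 * p.2.2) / 16, (p.2.2 - p.2.1) / 8))
    (fun p => (4 * p.1, 2 * p.2.1 - 7 * p.2.2, 2 * p.2.1 + p.2.2)) ?_ ?_
  · rintro ⟨x, y, z⟩ ⟨⟨h, h4⟩, hq⟩
    obtain ⟨hx, hy, hz⟩ := C_parity h
    obtain ⟨he, -⟩ := h
    dsimp only at *
    obtain ⟨v, rfl⟩ : ∃ v, x = 4 * v := ⟨x / 4, by omega⟩
    obtain ⟨b, rfl⟩ : ∃ b, y = z - 8 * b := ⟨(z - y) / 8, by omega⟩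
    have h1 : 4 * v ^ 2 + 3 * (z - b) ^ 2 + 21 * b ^ 2 = 8 * k + 17 := by nlinarith
    -- An even `b` would make the left side `3 mod 4`.
    have hb : b % 2 = 1 := by
      have := sq_cases b
      have := sq_cases (z - b)
      omega
    obtain ⟨a, ha⟩ : ∃ a, z = 2 * a + b := ⟨(z - b) / 2, by omega⟩
    subst ha
    have e1 : (2 * a + b - 8 * b + 7 * (2 * a + b)) / 16 = a := by omega
    have e2 : (2 * a + b - (2 * a + b - 8 * b)) / 8 = b := by omega
    have e3 : 4 * v / 4 = v := by omega
    rw [e1, e2, e3]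
    refine ⟨?_, ?_⟩
    · unfold E; dsimp only; nlinarith
    · refine Prod.ext rfl (Prod.ext ?_ ?_) <;> (try dsimp only) <;> omega
  · rintro ⟨v, a, b⟩ h
    obtain ⟨h1, h2⟩ := E_parity h
    unfold E at h
    dsimp only at *
    refine ⟨⟨⟨⟨?_, ?_⟩, ?_⟩, ?_⟩, ?_⟩ <;> try dsimp only
    · nlinarith
    · omega
    · omega
    · omega
    · refine Prod.ext ?_ (Prod.ext ?_ ?_) <;> (try dsimp only) <;> omega

/-- The rational isometry between `2 (4 v² + 12 a² + 21 b²)` and `2 x² + 3 y² + 21 z²`, restricted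
to the vectors on which it and its inverse are integral. -/
lemma card_E_eq (k : ℤ) :
    Nat.card {p : ℤ × ℤ × ℤ // E k p ∧ (p.1 + p.2.1 + p.2.2) % 4 = 2} =
    Nat.card {p : ℤ × ℤ × ℤ // DHalf k p ∧
      (p.1 + 2 * p.2.2 + (p.2.1 - p.2.2) / 4) % 4 = 0} := by
  refine card_eq_of_maps
    (fun p => (p.1 - 3 * p.2.1, (-p.1 - p.2.1 + 7 * p.2.2) / 2, (-p.1 - p.2.1 - p.2.2) / 2))
    (fun p => (p.1 - 3 * ((p.1 + 2 * p.2.2 + (p.2.1 - p.2.2) / 4) / 4),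
      -((p.1 + 2 * p.2.2 + (p.2.1 - p.2.2) / 4) / 4), (p.2.1 - p.2.2) / 4)) ?_ ?_
  · rintro ⟨v, a, b⟩ ⟨h, hq⟩
    obtain ⟨h1, h2⟩ := E_parity h
    unfold E at h
    dsimp only at *
    obtain ⟨z, rfl⟩ : ∃ z, v = -2 * z - a - b := ⟨(-v - a - b) / 2, by omega⟩
    have e1 : (-(-2 * z - a - b) - a + 7 * b) / 2 = z + 4 * b := by omega
    have e2 : (-(-2 * z - a - b) - a - b) / 2 = z := by omega
    rw [e1, e2]
    refine ⟨⟨⟨⟨⟨?_, ?_, ?_⟩, ?_⟩, ?_⟩, ?_⟩, ?_⟩ <;> try dsimp only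
    · omega
    · omega
    · omega
    · nlinarith
    · omega
    · omega
    · refine Prod.ext ?_ (Prod.ext ?_ ?_) <;> (try dsimp only) <;> omega
  · rintro ⟨x, y, z⟩ ⟨⟨⟨⟨hx, hy, hz⟩, he⟩, hq⟩, h4⟩
    dsimp only at *
    obtain ⟨b, rfl⟩ : ∃ b, y = z + 4 * b := ⟨(y - z) / 4, by omega⟩
    have e1 : (z + 4 * b - z) / 4 = b := by omega
    rw [e1] at h4 ⊢
    obtain ⟨a, rfl⟩ : ∃ a, x = -4 * a - 2 * z - b := ⟨-((x + 2 * z + b) / 4), by omega⟩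
    have e2 : (-4 * a - 2 * z - b + 2 * z + b) / 4 = -a := by omega
    rw [e2]
    refine ⟨⟨?_, ?_⟩, ?_⟩
    · unfold E; dsimp only; nlinarith
    · omega
    · refine Prod.ext ?_ (Prod.ext ?_ ?_) <;> (try dsimp only) <;> omega

/-! ### Triangular numbers and odd squares -/

lemma two_mul_tri (x : ℕ) : 2 * ((x * (x + 1) / 2 : ℕ) : ℤ) = (x : ℤ) ^ 2 + x := by
  have h : 2 * (x * (x + 1) / 2) = x * (x + 1) :=
    Nat.mul_div_cancel' (Nat.even_mul_succ_self x).two_dvd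
  have h' : ((2 * (x * (x + 1) / 2) : ℕ) : ℤ) = ((x * (x + 1) : ℕ) : ℤ) := by rw [h]
  push_cast at h' ⊢
  linarith

lemma card_D_eq_T (n : ℕ) (k : ℤ) (hk : (n : ℤ) = 2 * k + 1) :
    Nat.card {p // D k p} = 8 * T 2 3 21 n := by
  have h1 := card_eq_two_mul (D k) (fun p => 0 < p.1) (fun p => (-p.1, p.2)) (by simp)
    (by
      rintro ⟨x, y, z⟩ ⟨⟨hx, hy, hz⟩, he⟩
      refine ⟨⟨?_, hy, hz⟩, by simpa using he⟩
      dsimp only at *; omega)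
    (by
      rintro ⟨x, y, z⟩ ⟨⟨hx, hy, hz⟩, he⟩
      dsimp only at *; omega)
  have h2 := card_eq_two_mul (fun p => D k p ∧ 0 < p.1) (fun p => 0 < p.2.1)
    (fun p => (p.1, -p.2.1, p.2.2)) (by simp)
    (by
      rintro ⟨x, y, z⟩ ⟨⟨⟨hx, hy, hz⟩, he⟩, h⟩
      refine ⟨⟨⟨hx, ?_, hz⟩, by simpa using he⟩, h⟩
      dsimp only at *; omega)
    (by
      rintro ⟨x, y, z⟩ ⟨⟨⟨hx, hy, hz⟩, he⟩, h⟩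
      dsimp only at *; omega)
  have h3 := card_eq_two_mul (fun p => (D k p ∧ 0 < p.1) ∧ 0 < p.2.1) (fun p => 0 < p.2.2)
    (fun p => (p.1, p.2.1, -p.2.2)) (by simp)
    (by
      rintro ⟨x, y, z⟩ ⟨⟨⟨⟨hx, hy, hz⟩, he⟩, h⟩, h'⟩
      refine ⟨⟨⟨⟨hx, hy, ?_⟩, by simpa using he⟩, h⟩, h'⟩
      dsimp only at *; omega)
    (by
      rintro ⟨x, y, z⟩ ⟨⟨⟨⟨hx, hy, hz⟩, he⟩, h⟩, h'⟩
      dsimp only at *; omega)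
  have h4 : T 2 3 21 n =
      Nat.card {p : ℤ × ℤ × ℤ // ((D k p ∧ 0 < p.1) ∧ 0 < p.2.1) ∧ 0 < p.2.2} := by
    unfold T
    refine card_eq_of_maps
      (fun p => (2 * (p.1 : ℤ) + 1, 2 * (p.2.1 : ℤ) + 1, 2 * (p.2.2 : ℤ) + 1))
      (fun p => ((p.1 / 2).toNat, (p.2.1 / 2).toNat, (p.2.2 / 2).toNat)) ?_ ?_
    · rintro ⟨x, y, z⟩ h
      dsimp only at *
      have hx := two_mul_tri x
      have hy := two_mul_tri y
      have hz := two_mul_tri z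
      refine ⟨⟨⟨⟨⟨⟨?_, ?_, ?_⟩, ?_⟩, ?_⟩, ?_⟩, ?_⟩, ?_⟩ <;> try dsimp only
      · omega
      · omega
      · omega
      · generalize x * (x + 1) / 2 = s at *
        generalize y * (y + 1) / 2 = t at *
        generalize z * (z + 1) / 2 = u at *
        zify at h
        nlinarith
      · omega
      · omega
      · omega
      · refine Prod.ext ?_ (Prod.ext ?_ ?_) <;> (try dsimp only) <;> omega
    · rintro ⟨x, y, z⟩ ⟨⟨⟨⟨⟨hx, hy, hz⟩, he⟩, px⟩, py⟩, pz⟩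
      dsimp only at *
      obtain ⟨x, rfl⟩ : ∃ t : ℕ, x = 2 * (t : ℤ) + 1 := ⟨(x / 2).toNat, by omega⟩
      obtain ⟨y, rfl⟩ : ∃ t : ℕ, y = 2 * (t : ℤ) + 1 := ⟨(y / 2).toNat, by omega⟩
      obtain ⟨z, rfl⟩ : ∃ t : ℕ, z = 2 * (t : ℤ) + 1 := ⟨(z / 2).toNat, by omega⟩
      have e : ∀ t : ℕ, ((2 * (t : ℤ) + 1) / 2).toNat = t := fun t => by omega
      rw [e, e, e]
      refine ⟨?_, rfl⟩
      have hx := two_mul_tri x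
      have hy := two_mul_tri y
      have hz := two_mul_tri z
      generalize x * (x + 1) / 2 = s at *
      generalize y * (y + 1) / 2 = t at *
      generalize z * (z + 1) / 2 = u at *
      zify
      nlinarith
  rw [h1, h2, h3, ← h4]
  ring

/-- Solutions with `y` even have all coordinates even, so halving them gives `N (8 n + 26)`. -/
lemma card_N (n : ℕ) (k : ℤ) (hk : (n : ℤ) = 2 * k + 1) :
    N 2 3 21 (4 * (8 * n + 26)) = N 2 3 21 (8 * n + 26) + Nat.card {p // C k p} := by
  have hN : ∀ m : ℕ, N 2 3 21 m =
      Nat.card {p : ℤ × ℤ × ℤ // 2 * p.1 ^ 2 + 3 * p.2.1 ^ 2 + 21 * p.2.2 ^ 2 = (m : ℤ)} := by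
    intro m; simp [N]
  have e1 : ((4 * (8 * n + 26) : ℕ) : ℤ) = 4 * (16 * k + 34) := by push_cast; linarith
  have e2 : ((8 * n + 26 : ℕ) : ℤ) = 16 * k + 34 := by push_cast; linarith
  rw [hN, hN, e1, e2, card_split _ (fun p => p.2.1 % 2 = 0) (finite_reps _)]
  congr 1
  refine card_eq_of_maps (fun p => (p.1 / 2, p.2.1 / 2, p.2.2 / 2))
    (fun p => (2 * p.1, 2 * p.2.1, 2 * p.2.2)) ?_ ?_
  · rintro ⟨x, y, z⟩ ⟨he, hy⟩
    dsimp only at *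
    have h1 := sq_cases x
    have h2 := sq_even hy
    have h3 := sq_cases z
    obtain ⟨x, rfl⟩ : ∃ t, x = 2 * t := ⟨x / 2, by omega⟩
    obtain ⟨y, rfl⟩ : ∃ t, y = 2 * t := ⟨y / 2, by omega⟩
    obtain ⟨z, rfl⟩ : ∃ t, z = 2 * t := ⟨z / 2, by omega⟩
    have e : ∀ t : ℤ, 2 * t / 2 = t := fun t => by omega
    rw [e, e, e]
    exact ⟨by nlinarith, rfl⟩
  · rintro ⟨x, y, z⟩ he
    dsimp only at *
    have e : ∀ t : ℤ, 2 * t / 2 = t := fun t => by omega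
    rw [e, e, e]
    exact ⟨⟨by nlinarith, by omega⟩, rfl⟩

lemma card_C (k : ℤ) : Nat.card {p // C k p} = 2 * Nat.card {p // D k p} := by
  have hfin : Finite {p // C k p} := by
    have := finite_reps (4 * (16 * k + 34))
    exact Finite.of_injective
      (fun p : {p // C k p} => (⟨p.1, p.2.1⟩ : {p : ℤ × ℤ × ℤ //
        2 * p.1 ^ 2 + 3 * p.2.1 ^ 2 + 21 * p.2.2 ^ 2 = 4 * (16 * k + 34)}))
      (fun a b h => Subtype.ext (by simpa using h))
  have h0 := card_split (C k) (fun p => p.1 % 4 = 0) hfin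
  have h1 := card_C_two k
  have h2 := card_C_zero k
  have h3 := card_C_two_eq k
  have h4 := card_C_zero_eq k
  have h5 := card_E k
  have h6 := card_E_eq k
  have h7 := card_D k
  have h8 := card_DHalf k
  omega

end TernarySum

theorem stmt_11 (n : ℕ) (hn : 0 < n) (hpar : Odd n) :
    (16 * T 2 3 21 n : ℤ) = (N 2 3 21 (4 * (8 * n + 26)) : ℤ) - (N 2 3 21 (8 * n + 26) : ℤ) := by
  obtain ⟨k, rfl⟩ := hpar
  have hk : ((2 * k + 1 : ℕ) : ℤ) = 2 * (k : ℤ) + 1 := by push_cast; ring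
  have h1 := TernarySum.card_N _ _ hk
  have h2 := TernarySum.card_C k
  have h3 := TernarySum.card_D_eq_T _ _ hk
  omega
end

section
/- For every odd positive integer n, 16·T(3,5,6;n) = N(3,5,6;4(8n+14)) − N(3,5,6;8n+14). -/
/-! ### Counting tools -/

lemma ncard_eq_of_inverse {α β : Type*} {S : Set α} {R : Set β} (f : α → β) (g : β → α)
    (hf : ∀ s ∈ S, f s ∈ R ∧ g (f s) = s) (hg : ∀ r ∈ R, g r ∈ S ∧ f (g r) = r) :
    S.ncard = R.ncard := by
  refine Set.ncard_congr (fun s _ => f s) (fun s hs => (hf s hs).1) ?_ ?_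
  · intro a b ha hb hab
    rw [← (hf a ha).2, ← (hf b hb).2]
    exact congrArg g hab
  · intro r hr
    exact ⟨g r, (hg r hr).1, (hg r hr).2⟩

/-- If an involution of a finite set exchanges a property with its negation, then exactly half of
the elements have the property. -/
lemma ncard_eq_two_mul {α : Type*} {S : Set α} (hS : S.Finite) (σ : α → α) (P : α → Prop)
    (hσ : ∀ s ∈ S, σ s ∈ S ∧ σ (σ s) = s ∧ (P (σ s) ↔ ¬ P s)) :
    S.ncard = 2 * {s | s ∈ S ∧ P s}.ncard := by
  have h1 : {s | s ∈ S ∧ P s}.ncard = {s | s ∈ S ∧ ¬ P s}.ncard := by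
    refine ncard_eq_of_inverse σ σ ?_ ?_
    · rintro s ⟨hs, hp⟩
      obtain ⟨h1, h2, h3⟩ := hσ s hs
      exact ⟨⟨h1, by tauto⟩, h2⟩
    · rintro s ⟨hs, hp⟩
      obtain ⟨h1, h2, h3⟩ := hσ s hs
      exact ⟨⟨h1, by tauto⟩, h2⟩
  have h2 : S = {s | s ∈ S ∧ P s} ∪ {s | s ∈ S ∧ ¬ P s} := by
    ext s
    simp only [Set.mem_union, Set.mem_ofPred_eq]
    tauto
  have h3 : S.ncard = {s | s ∈ S ∧ P s}.ncard + {s | s ∈ S ∧ ¬ P s}.ncard := by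
    conv_lhs => rw [h2]
    refine Set.ncard_union_eq ?_ (hS.subset fun s hs => hs.1) (hS.subset fun s hs => hs.1)
    rw [Set.disjoint_left]
    rintro s ⟨_, hp⟩ ⟨_, hp'⟩
    exact hp' hp
  omega

lemma finite_sols (a b c M : ℤ) (ha : 0 < a) (hb : 0 < b) (hc : 0 < c) :
    {p : ℤ × ℤ × ℤ | a * p.1 ^ 2 + b * p.2.1 ^ 2 + c * p.2.2 ^ 2 = M}.Finite := by
  refine (((Set.finite_Icc (-M) M).prod
    ((Set.finite_Icc (-M) M).prod (Set.finite_Icc (-M) M)))).subset ?_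
  rintro ⟨x, y, z⟩ h
  simp only [Set.mem_ofPred_eq] at h
  have key : ∀ d w : ℤ, 0 < d → w ≤ d * w ^ 2 ∧ -w ≤ d * w ^ 2 := by
    intro d w hd
    have h1 : w ^ 2 ≤ d * w ^ 2 := by nlinarith [sq_nonneg w]
    have h2 : |w| ≤ w ^ 2 := by
      rw [← Int.natCast_natAbs, ← Int.natAbs_sq]
      exact_mod_cast Nat.le_self_pow two_ne_zero _
    exact ⟨(le_abs_self w).trans (h2.trans h1), (neg_le_abs w).trans (h2.trans h1)⟩
  have pos : ∀ d w : ℤ, 0 < d → 0 ≤ d * w ^ 2 := fun d w hd => by positivity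
  have := key a x ha
  have := key b y hb
  have := key c z hc
  have := pos a x ha
  have := pos b y hb
  have := pos c z hc
  simp only [Set.mem_prod, Set.mem_Icc]
  refine ⟨⟨?_, ?_⟩, ⟨?_, ?_⟩, ⟨?_, ?_⟩⟩ <;> linarith

lemma odd_sq {x : ℤ} (h : x % 2 = 1) : ∃ j, x ^ 2 = 8 * j + 1 := by
  obtain ⟨a, rfl⟩ : ∃ a, x = 2 * a + 1 := ⟨x / 2, by omega⟩
  obtain ⟨b, hb⟩ := Int.even_mul_succ_self a
  exact ⟨b, by linear_combination 4 * hb⟩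

/-- Reduction of a product of two parities, in a form usable by linear arithmetic. -/
lemma mul_parity (x y : ℤ) : (x * y) % 2 = (x % 2) * (y % 2) := by
  rcases Int.emod_two_eq_zero_or_one x with h | h <;>
    rcases Int.emod_two_eq_zero_or_one y with h' | h' <;> simp [Int.mul_emod, h, h']

/-! ### The solution sets -/

/-- Integer solutions of `3x² + 5y² + 6z² = M`. -/
def sols (M : ℤ) : Set (ℤ × ℤ × ℤ) :=
  {p | 3 * p.1 ^ 2 + 5 * p.2.1 ^ 2 + 6 * p.2.2 ^ 2 = M}

/-- Solutions of `3x² + 5y² + 6z² = 16k + 22` in odd integers. -/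
def oddSols (k : ℤ) : Set (ℤ × ℤ × ℤ) :=
  {p | p ∈ sols (16 * k + 22) ∧ p.1 % 2 = 1 ∧ p.2.1 % 2 = 1 ∧ p.2.2 % 2 = 1}

/-- Solutions of `3x² + 5y² + 6z² = 4(16k + 22)` with `x, y` odd and `z` in the residue class `e`
modulo `4`. -/
def bigSols (k e : ℤ) : Set (ℤ × ℤ × ℤ) :=
  {p | p ∈ sols (64 * k + 88) ∧ p.1 % 2 = 1 ∧ p.2.1 % 2 = 1 ∧ p.2.2 % 4 = e}

/-- Solutions `(p, s, t)` of `p² + 15s² + 3t² = 8k + 11` in odd integers. -/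
def midSols (k : ℤ) : Set (ℤ × ℤ × ℤ) :=
  {p | 1 * p.1 ^ 2 + 15 * p.2.1 ^ 2 + 3 * p.2.2 ^ 2 = 8 * k + 11 ∧
    p.1 % 2 = 1 ∧ p.2.1 % 2 = 1 ∧ p.2.2 % 2 = 1}

lemma sols_finite (M : ℤ) : (sols M).Finite :=
  finite_sols 3 5 6 M (by norm_num) (by norm_num) (by norm_num)

lemma oddSols_finite (k : ℤ) : (oddSols k).Finite := (sols_finite _).subset fun _ h => h.1

lemma bigSols_finite (k e : ℤ) : (bigSols k e).Finite := (sols_finite _).subset fun _ h => h.1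

lemma midSols_finite (k : ℤ) : (midSols k).Finite :=
  (finite_sols 1 15 3 _ (by norm_num) (by norm_num) (by norm_num)).subset fun _ h => h.1

lemma N_eq_ncard_s12 (M : ℕ) : N 3 5 6 M = (sols M).ncard := rfl

/-! ### Triangular numbers and odd squares -/

lemma two_mul_triangle (x : ℕ) : 2 * ((x : ℤ) * (x + 1) / 2) = x * (x + 1) :=
  Int.mul_ediv_cancel' (Int.even_mul_succ_self (x : ℤ)).two_dvd

lemma ncard_oddSols (n : ℕ) (k : ℤ) (hk : (n : ℤ) = 2 * k + 1) :
    (oddSols k).ncard = 8 * T 3 5 6 n := by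
  have e1 := ncard_eq_two_mul (oddSols_finite k) (fun p => (-p.1, p.2.1, p.2.2))
    (fun p => 0 < p.1) (by
      rintro ⟨x, y, z⟩ ⟨h, hx, hy, hz⟩
      simp only [oddSols, sols, Set.mem_ofPred_eq, neg_sq, neg_neg] at *
      refine ⟨⟨h, ?_⟩, trivial, ?_⟩ <;> omega)
  have e2 := ncard_eq_two_mul ((oddSols_finite k).subset
      (show {p | p ∈ oddSols k ∧ 0 < p.1} ⊆ oddSols k from fun p hp => hp.1))
    (fun p => (p.1, -p.2.1, p.2.2)) (fun p => 0 < p.2.1) (by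
      rintro ⟨x, y, z⟩ ⟨⟨h, hx, hy, hz⟩, hp⟩
      simp only [oddSols, sols, Set.mem_ofPred_eq, neg_sq, neg_neg] at *
      refine ⟨⟨⟨h, ?_⟩, ?_⟩, trivial, ?_⟩ <;> omega)
  have e3 := ncard_eq_two_mul ((oddSols_finite k).subset
      (show {p | (p ∈ oddSols k ∧ 0 < p.1) ∧ 0 < p.2.1} ⊆ oddSols k from fun p hp => hp.1.1))
    (fun p => (p.1, p.2.1, -p.2.2)) (fun p => 0 < p.2.2) (by
      rintro ⟨x, y, z⟩ ⟨⟨⟨h, hx, hy, hz⟩, hp⟩, hq⟩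
      simp only [oddSols, sols, Set.mem_ofPred_eq, neg_sq, neg_neg] at *
      refine ⟨⟨⟨⟨h, ?_⟩, ?_⟩, ?_⟩, trivial, ?_⟩ <;> omega)
  have e4 : {p | ((p ∈ oddSols k ∧ 0 < p.1) ∧ 0 < p.2.1) ∧ 0 < p.2.2}.ncard = T 3 5 6 n := by
    change _ = Set.ncard {p : ℕ × ℕ × ℕ |
      3 * (p.1 * (p.1 + 1) / 2) + 5 * (p.2.1 * (p.2.1 + 1) / 2)
        + 6 * (p.2.2 * (p.2.2 + 1) / 2) = n}
    -- `X = 2x + 1` turns `x(x+1)/2` into `(X² - 1)/8`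
    refine ncard_eq_of_inverse
      (fun p => ((p.1 / 2).toNat, (p.2.1 / 2).toNat, (p.2.2 / 2).toNat))
      (fun q => (2 * (q.1 : ℤ) + 1, 2 * (q.2.1 : ℤ) + 1, 2 * (q.2.2 : ℤ) + 1)) ?_ ?_
    · rintro ⟨x, y, z⟩ ⟨⟨⟨⟨h, hx, hy, hz⟩, h1⟩, h2⟩, h3⟩
      simp only [sols, Set.mem_ofPred_eq] at *
      obtain ⟨a, rfl⟩ : ∃ a : ℕ, x = 2 * a + 1 := ⟨(x / 2).toNat, by omega⟩
      obtain ⟨b, rfl⟩ : ∃ a : ℕ, y = 2 * a + 1 := ⟨(y / 2).toNat, by omega⟩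
      obtain ⟨c, rfl⟩ : ∃ a : ℕ, z = 2 * a + 1 := ⟨(z / 2).toNat, by omega⟩
      have r : ∀ a : ℕ, ((2 * (a : ℤ) + 1) / 2).toNat = a := fun a => by omega
      simp only [r]
      refine ⟨?_, trivial⟩
      zify
      have := two_mul_triangle a
      have := two_mul_triangle b
      have := two_mul_triangle c
      linarith
    · rintro ⟨a, b, c⟩ h
      simp only [oddSols, sols, Set.mem_ofPred_eq] at *
      zify at h
      have := two_mul_triangle a
      have := two_mul_triangle b
      have := two_mul_triangle c
      refine ⟨⟨⟨⟨⟨?_, ?_, ?_, ?_⟩, ?_⟩, ?_⟩, ?_⟩, ?_⟩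
      · linarith
      any_goals omega
      ext <;> simp <;> omega
  simp only [Set.mem_ofPred_eq] at e1 e2 e3 e4
  omega

/-! ### Splitting the solutions for `4m` -/

lemma ncard_sols_four (k : ℤ) : (sols (64 * k + 88)).ncard =
    (sols (16 * k + 22)).ncard + (bigSols k 2).ncard + (bigSols k 0).ncard := by
  have hE : (sols (16 * k + 22)).ncard = {p | p ∈ sols (64 * k + 88) ∧
      p.1 % 2 = 0 ∧ p.2.1 % 2 = 0 ∧ p.2.2 % 2 = 0}.ncard := by
    refine ncard_eq_of_inverse (fun p => (2 * p.1, 2 * p.2.1, 2 * p.2.2))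
      (fun p => (p.1 / 2, p.2.1 / 2, p.2.2 / 2)) ?_ ?_
    · rintro ⟨x, y, z⟩ h
      simp only [sols, Set.mem_ofPred_eq] at *
      refine ⟨⟨?_, ?_⟩, ?_⟩
      · linear_combination 4 * h
      · omega
      · ext <;> simp
    · rintro ⟨x, y, z⟩ ⟨h, hx, hy, hz⟩
      simp only [sols, Set.mem_ofPred_eq] at *
      obtain ⟨a, rfl⟩ : ∃ a, x = 2 * a := ⟨x / 2, by omega⟩
      obtain ⟨b, rfl⟩ : ∃ a, y = 2 * a := ⟨y / 2, by omega⟩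
      obtain ⟨c, rfl⟩ : ∃ a, z = 2 * a := ⟨z / 2, by omega⟩
      have r : ∀ a : ℤ, 2 * a / 2 = a := fun a => by omega
      simp only [r]
      exact ⟨by linarith, trivial⟩
  have hU : sols (64 * k + 88) = ({p | p ∈ sols (64 * k + 88) ∧
      p.1 % 2 = 0 ∧ p.2.1 % 2 = 0 ∧ p.2.2 % 2 = 0} ∪ bigSols k 2) ∪ bigSols k 0 := by
    ext ⟨x, y, z⟩
    simp only [Set.mem_union, bigSols, Set.mem_ofPred_eq]
    refine ⟨fun h => ?_, by tauto⟩
    suffices (x % 2 = 0 ∧ y % 2 = 0 ∧ z % 2 = 0) ∨ (x % 2 = 1 ∧ y % 2 = 1 ∧ z % 2 = 0) by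
      have : z % 2 = 0 → z % 4 = 2 ∨ z % 4 = 0 := by omega
      tauto
    simp only [sols, Set.mem_ofPred_eq] at h
    have sq : ∀ x : ℤ, x % 2 = 0 ∧ (∃ j, x ^ 2 = 4 * j) ∨ x % 2 = 1 ∧ ∃ j, x ^ 2 = 8 * j + 1 := by
      intro x
      rcases Int.emod_two_eq_zero_or_one x with hx | hx
      · obtain ⟨a, rfl⟩ : ∃ a, x = 2 * a := ⟨x / 2, by omega⟩
        exact Or.inl ⟨hx, a ^ 2, by ring⟩
      · exact Or.inr ⟨hx, odd_sq hx⟩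
    rcases sq x with ⟨hx, i, hi⟩ | ⟨hx, i, hi⟩ <;> rcases sq y with ⟨hy, j, hj⟩ | ⟨hy, j, hj⟩ <;>
      rcases sq z with ⟨hz, l, hl⟩ | ⟨hz, l, hl⟩ <;> rw [hi, hj, hl] at h <;> omega
  have fE := (sols_finite (64 * k + 88)).subset (show {p | p ∈ sols (64 * k + 88) ∧
      p.1 % 2 = 0 ∧ p.2.1 % 2 = 0 ∧ p.2.2 % 2 = 0} ⊆ sols (64 * k + 88) from fun p hp => hp.1)
  conv_lhs => rw [hU]
  rw [hE, Set.ncard_union_eq ?_ (fE.union (bigSols_finite k 2)) (bigSols_finite k 0),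
    Set.ncard_union_eq ?_ fE (bigSols_finite k 2)]
  · rw [Set.disjoint_left]
    rintro p ⟨_, h, _⟩ ⟨_, h', _⟩
    omega
  · rw [Set.disjoint_left]
    rintro p (⟨_, h, _⟩ | ⟨_, h, _, h2⟩) ⟨_, h', _, h3⟩ <;> omega

/-! ### The class `z ≡ 2 (mod 4)` -/

/-- Multiplication by `(1 + √-15)/2` on `x√3 + y√-5`, on the halves where it preserves oddness. -/
lemma ncard_half_bigSols_two (k : ℤ) :
    {p | p ∈ oddSols k ∧ (p.1 + p.2.1) % 4 = 0}.ncard =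
      {p | p ∈ bigSols k 2 ∧ (p.1 + p.2.1) % 4 = 0}.ncard := by
  refine ncard_eq_of_inverse
    (fun p => ((p.1 - 5 * p.2.1) / 2, (p.2.1 + 3 * p.1) / 2, 2 * p.2.2))
    (fun p => ((p.1 + 5 * p.2.1) / 8, (p.2.1 - 3 * p.1) / 8, p.2.2 / 2)) ?_ ?_
  · rintro ⟨x, y, z⟩ ⟨⟨h, hx, hy, hz⟩, h4⟩
    simp only [bigSols, sols, Set.mem_ofPred_eq] at *
    obtain ⟨a, rfl⟩ : ∃ a, x = 4 * a - y := ⟨(x + y) / 4, by omega⟩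
    have r1 : (4 * a - y - 5 * y) / 2 = 2 * a - 3 * y := by omega
    have r2 : (y + 3 * (4 * a - y)) / 2 = 6 * a - y := by omega
    rw [r1, r2]
    refine ⟨⟨⟨by linear_combination 4 * h, by omega, by omega, by omega⟩, by omega⟩, ?_⟩
    ext <;> simp <;> omega
  · rintro ⟨x, y, z⟩ ⟨⟨h, hx, hy, hz⟩, h4⟩
    simp only [oddSols, sols, Set.mem_ofPred_eq] at *
    obtain ⟨w, rfl⟩ : ∃ w, z = 2 * w := ⟨z / 2, by omega⟩
    have hw : w % 2 = 1 := by omega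
    obtain ⟨l, hl⟩ := odd_sq hw
    obtain ⟨a, rfl⟩ : ∃ a, x = 4 * a - y := ⟨(x + y) / 4, by omega⟩
    have ha : a % 2 = 1 := by
      have e : 6 * (a * a) - 3 * (a * y) + y * y = 8 * k + 8 - 24 * l := by
        linarith
      have p1 := mul_parity a y
      have p2 := mul_parity y y
      rcases Int.emod_two_eq_zero_or_one a with ha | ha
      · rw [ha, hy] at p1; rw [hy] at p2; omega
      · exact ha
    obtain ⟨X, rfl⟩ : ∃ X, a = 2 * X - y := ⟨(a + y) / 2, by omega⟩
    have hX : X % 2 = 1 := by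
      have e : 12 * (X * X) - 15 * (X * y) + 5 * (y * y) = 4 * k + 4 - 12 * l := by
        linarith
      have p1 := mul_parity X y
      have p2 := mul_parity y y
      rcases Int.emod_two_eq_zero_or_one X with ha | ha
      · rw [ha, hy] at p1; rw [hy] at p2; omega
      · exact ha
    have r1 : (4 * (2 * X - y) - y + 5 * y) / 8 = X := by omega
    have r2 : (y - 3 * (4 * (2 * X - y) - y)) / 8 = 2 * y - 3 * X := by omega
    have r3 : 2 * w / 2 = w := by omega
    rw [r1, r2, r3]
    refine ⟨⟨⟨by linarith, by omega, by omega, by omega⟩, by omega⟩, ?_⟩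
    ext <;> simp <;> omega

/-- The sign change of `y` exchanges `4 ∣ x + y` with its negation when `x, y` are odd. -/
lemma ncard_oddSols_add (k : ℤ) :
    (oddSols k).ncard = 2 * {p | p ∈ oddSols k ∧ (p.1 + p.2.1) % 4 = 0}.ncard := by
  refine ncard_eq_two_mul (oddSols_finite k) (fun p => (p.1, -p.2.1, p.2.2)) _ ?_
  rintro ⟨x, y, z⟩ ⟨h, hx, hy, hz⟩
  simp only [oddSols, sols, Set.mem_ofPred_eq, neg_sq, neg_neg] at *
  refine ⟨⟨h, ?_⟩, trivial, ?_⟩ <;> omega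

lemma ncard_oddSols_sub (k : ℤ) :
    (oddSols k).ncard = 2 * {p | p ∈ oddSols k ∧ (p.1 - p.2.1) % 4 = 0}.ncard := by
  refine ncard_eq_two_mul (oddSols_finite k) (fun p => (p.1, -p.2.1, p.2.2)) _ ?_
  rintro ⟨x, y, z⟩ ⟨h, hx, hy, hz⟩
  simp only [oddSols, sols, Set.mem_ofPred_eq, neg_sq, neg_neg] at *
  refine ⟨⟨h, ?_⟩, trivial, ?_⟩ <;> omega

lemma ncard_bigSols_add (k e : ℤ) :
    (bigSols k e).ncard = 2 * {p | p ∈ bigSols k e ∧ (p.1 + p.2.1) % 4 = 0}.ncard := by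
  refine ncard_eq_two_mul (bigSols_finite k e) (fun p => (p.1, -p.2.1, p.2.2)) _ ?_
  rintro ⟨x, y, z⟩ ⟨h, hx, hy, hz⟩
  simp only [bigSols, sols, Set.mem_ofPred_eq, neg_sq, neg_neg] at *
  refine ⟨⟨h, ?_⟩, trivial, ?_⟩ <;> omega

lemma ncard_bigSols_sub (k e : ℤ) :
    (bigSols k e).ncard = 2 * {p | p ∈ bigSols k e ∧ (p.1 - p.2.1) % 4 = 0}.ncard := by
  refine ncard_eq_two_mul (bigSols_finite k e) (fun p => (p.1, -p.2.1, p.2.2)) _ ?_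
  rintro ⟨x, y, z⟩ ⟨h, hx, hy, hz⟩
  simp only [bigSols, sols, Set.mem_ofPred_eq, neg_sq, neg_neg] at *
  refine ⟨⟨h, ?_⟩, trivial, ?_⟩ <;> omega

/-! ### The class `z ≡ 0 (mod 4)` -/

lemma ncard_midSols_snd (k : ℤ) :
    (midSols k).ncard = 2 * {p | p ∈ midSols k ∧ (p.1 - p.2.1) % 4 = 0}.ncard := by
  refine ncard_eq_two_mul (midSols_finite k) (fun p => (p.1, -p.2.1, p.2.2)) _ ?_
  rintro ⟨x, y, z⟩ ⟨h, hx, hy, hz⟩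
  simp only [midSols, Set.mem_ofPred_eq, neg_sq, neg_neg] at *
  refine ⟨⟨h, ?_⟩, trivial, ?_⟩ <;> omega

lemma ncard_midSols_trd (k : ℤ) :
    (midSols k).ncard = 2 * {p | p ∈ midSols k ∧ (p.1 - p.2.2) % 4 = 0}.ncard := by
  refine ncard_eq_two_mul (midSols_finite k) (fun p => (p.1, p.2.1, -p.2.2)) _ ?_
  rintro ⟨x, y, z⟩ ⟨h, hx, hy, hz⟩
  simp only [midSols, Set.mem_ofPred_eq, neg_sq, neg_neg] at *
  refine ⟨⟨h, ?_⟩, trivial, ?_⟩ <;> omega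

/-- The substitution rests on `3x² + 5y² = 2(p² + 15s²)` for `p = (3x + 5y)/4`, `s = (x - y)/4`. -/
lemma ncard_half_oddSols (k : ℤ) :
    {p | p ∈ oddSols k ∧ (p.1 - p.2.1) % 4 = 0}.ncard =
      {p | p ∈ midSols k ∧ (p.1 - p.2.1) % 4 = 0}.ncard := by
  refine ncard_eq_of_inverse
    (fun p => ((3 * p.1 + 5 * p.2.1) / 4, (p.1 - p.2.1) / 4, p.2.2))
    (fun p => ((p.1 + 5 * p.2.1) / 2, (p.1 - 3 * p.2.1) / 2, p.2.2)) ?_ ?_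
  · rintro ⟨x, y, z⟩ ⟨⟨h, hx, hy, hz⟩, h4⟩
    simp only [midSols, sols, Set.mem_ofPred_eq] at *
    obtain ⟨l, hl⟩ := odd_sq hz
    obtain ⟨s, rfl⟩ : ∃ s, x = y + 4 * s := ⟨(x - y) / 4, by omega⟩
    have hs : s % 2 = 1 := by
      have e : y * y + 3 * (s * y) + 6 * (s * s) = 2 * k + 2 - 6 * l := by
        linarith
      have p1 := mul_parity s y
      have p2 := mul_parity y y
      rcases Int.emod_two_eq_zero_or_one s with ha | ha
      · rw [ha, hy] at p1; rw [hy] at p2; omega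
      · exact ha
    have r1 : (3 * (y + 4 * s) + 5 * y) / 4 = 2 * y + 3 * s := by omega
    have r2 : (y + 4 * s - y) / 4 = s := by omega
    rw [r1, r2]
    refine ⟨⟨⟨by linarith, by omega, by omega, by omega⟩, by omega⟩, ?_⟩
    ext <;> simp <;> omega
  · rintro ⟨p, s, z⟩ ⟨⟨h, hx, hy, hz⟩, h4⟩
    simp only [oddSols, sols, Set.mem_ofPred_eq] at *
    obtain ⟨e, rfl⟩ : ∃ e, p = s + 4 * e := ⟨(p - s) / 4, by omega⟩
    have r1 : (s + 4 * e + 5 * s) / 2 = 3 * s + 2 * e := by omega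
    have r2 : (s + 4 * e - 3 * s) / 2 = 2 * e - s := by omega
    rw [r1, r2]
    refine ⟨⟨⟨by linarith, by omega, by omega, by omega⟩, by omega⟩, ?_⟩
    ext <;> simp <;> omega

/-- With `u = (p + 3t)/2` and `v = (p - t)/4`, one has `p² + 3t² = u² + 12v²`, and
`3(u + 5s)² + 5(u - 3s)² = 8(u² + 15s²)`; the bijection is `x = u + 5s`, `y = u - 3s`, `z = 4v`. -/
lemma ncard_half_bigSols_zero (k : ℤ) :
    {p | p ∈ midSols k ∧ (p.1 - p.2.2) % 4 = 0}.ncard =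
      {p | p ∈ bigSols k 0 ∧ (p.1 - p.2.1) % 4 = 0}.ncard := by
  refine ncard_eq_of_inverse
    (fun p => ((p.1 + 3 * p.2.2) / 2 + 5 * p.2.1, (p.1 + 3 * p.2.2) / 2 - 3 * p.2.1,
      p.1 - p.2.2))
    (fun p => ((p.2.1 + 3 * ((p.1 - p.2.1) / 8)) / 2 + 3 * (p.2.2 / 4), (p.1 - p.2.1) / 8,
      (p.2.1 + 3 * ((p.1 - p.2.1) / 8)) / 2 - p.2.2 / 4)) ?_ ?_
  · rintro ⟨p, s, t⟩ ⟨⟨h, hx, hy, hz⟩, h4⟩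
    simp only [bigSols, sols, Set.mem_ofPred_eq] at *
    obtain ⟨v, rfl⟩ : ∃ v, p = t + 4 * v := ⟨(p - t) / 4, by omega⟩
    have r1 : (t + 4 * v + 3 * t) / 2 = 2 * t + 2 * v := by omega
    rw [r1]
    refine ⟨⟨⟨by linarith, by omega, by omega, by omega⟩, by omega⟩, ?_⟩
    ext <;> simp <;> omega
  · rintro ⟨x, y, z⟩ ⟨⟨h, hx, hy, hz⟩, h4⟩
    simp only [midSols, sols, Set.mem_ofPred_eq] at *
    obtain ⟨v, rfl⟩ : ∃ v, z = 4 * v := ⟨z / 4, by omega⟩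
    obtain ⟨a, rfl⟩ : ∃ a, x = y + 4 * a := ⟨(x - y) / 4, by omega⟩
    have ha : a % 2 = 0 := by
      have e : y * y + 3 * (a * y) + 6 * (a * a) = 8 * k + 11 - 12 * (v * v) := by
        linarith
      have p1 := mul_parity a y
      have p2 := mul_parity y y
      rcases Int.emod_two_eq_zero_or_one a with ha | ha
      · exact ha
      · rw [ha, hy] at p1; rw [hy] at p2; omega
    obtain ⟨s, rfl⟩ : ∃ s, a = 2 * s := ⟨a / 2, by omega⟩
    have hs : s % 2 = 1 := by
      obtain ⟨j, hj⟩ := odd_sq hy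
      have e : 6 * (s * y) + 24 * (s * s) = 8 * k + 10 - 8 * j - 12 * (v * v) := by
        linarith
      have p1 := mul_parity s y
      rcases Int.emod_two_eq_zero_or_one s with ha | ha
      · rw [ha, hy] at p1; omega
      · exact ha
    obtain ⟨u, rfl⟩ : ∃ u, y = 2 * u - 3 * s := ⟨(y + 3 * s) / 2, by omega⟩
    have huv : (u + v) % 2 = 1 := by
      obtain ⟨j, hj⟩ := odd_sq hs
      have e : u * u + 3 * (v * v) = 2 * k - 1 - 30 * j := by
        linarith
      have p1 := mul_parity u u
      have p2 := mul_parity v v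
      rcases Int.emod_two_eq_zero_or_one u with hu | hu <;>
        rcases Int.emod_two_eq_zero_or_one v with hv | hv <;>
        rw [hu] at p1 <;> rw [hv] at p2 <;> omega
    have r1 : (2 * u - 3 * s + 4 * (2 * s) - (2 * u - 3 * s)) / 8 = s := by omega
    have r2 : (2 * u - 3 * s + 3 * s) / 2 = u := by omega
    have r3 : 4 * v / 4 = v := by omega
    rw [r1, r2, r3]
    refine ⟨⟨⟨by linarith, by omega, by omega, by omega⟩, by omega⟩, ?_⟩
    ext <;> simp <;> omega

/-! ### Combining the counts -/

theorem stmt_12 (n : ℕ) (hn : 0 < n) (hpar : Odd n) :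
    (16 * T 3 5 6 n : ℤ) = (N 3 5 6 (4 * (8 * n + 14)) : ℤ) - (N 3 5 6 (8 * n + 14) : ℤ) := by
  obtain ⟨k, rfl⟩ := hpar
  have hT := ncard_oddSols (2 * k + 1) k (by push_cast; ring)
  have h4 := ncard_sols_four k
  have c1 : ((4 * (8 * (2 * k + 1) + 14) : ℕ) : ℤ) = 64 * k + 88 := by push_cast; ring
  have c2 : ((8 * (2 * k + 1) + 14 : ℕ) : ℤ) = 16 * k + 22 := by push_cast; ring
  rw [N_eq_ncard_s12, N_eq_ncard_s12, c1, c2]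
  have := ncard_half_bigSols_two k
  have := ncard_oddSols_add k
  have := ncard_oddSols_sub k
  have := ncard_bigSols_add k 2
  have := ncard_bigSols_sub k 0
  have := ncard_midSols_snd k
  have := ncard_midSols_trd k
  have := ncard_half_oddSols k
  have := ncard_half_bigSols_zero k
  omega
end
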